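/- Let (X,d,μ) be a metric measure space with finite Hausdorff dimension. Suppose there exists C ≥ 1 such that for every Lipschitz f : X → ℝ and every *-upper gradient ρ of f, one has Lip(f,x) ≤ C·ρ(x) for μ-almost every x ∈ X. Then (X,d,μ) is a Lipschitz differentiability space, and the charts can be chosen with every chart dimension n_i ≤ dim_H X. -/

import Mathlib

open MeasureTheory Metric Set Filter Topology ENNReal NNReal
open scoped RealInnerProductSpace

noncomputable section

namespace BKO

/-- `ℝⁿ` with the Euclidean metric. -/
abbrev E (n : ℕ) : Type := EuclideanSpace ℝ (Fin n)

variable {X : Type*} [MetricSpace X]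

/-- A set `G ⊆ ℝ × X` is the graph of a curve fragment if all first coordinates lie
in `[0,1]` and it is the graph of a `2`-biLipschitz function defined on a subset of `[0,1]`. -/
def IsFragmentGraph (X : Type*) [MetricSpace X] (G : Set (ℝ × X)) : Prop :=
  (∀ p ∈ G, p.1 ∈ Set.Icc (0:ℝ) 1) ∧
  ∀ p ∈ G, ∀ q ∈ G, |p.1 - q.1| ≤ 2 * dist p.2 q.2 ∧ dist p.2 q.2 ≤ 2 * |p.1 - q.1|

/-- The space `Γ(X)` of curve fragments, identified with their graphs (nonempty compact
subsets of `[0,1] × X`), with the Hausdorff metric `d_Γ(γ₁,γ₂) = d_H(gr γ₁, gr γ₂)`. -/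
def Fragment (X : Type*) [MetricSpace X] : Type _ :=
  {G : TopologicalSpace.NonemptyCompacts (ℝ × X) // IsFragmentGraph X (G : Set (ℝ × X))}

instance : MetricSpace (Fragment X) :=
  inferInstanceAs (MetricSpace {G : TopologicalSpace.NonemptyCompacts (ℝ × X) // _})

instance : MeasurableSpace (Fragment X) := borel _
instance : BorelSpace (Fragment X) := ⟨rfl⟩

namespace Fragment

/-- The graph of a curve fragment. -/
def graph (γ : Fragment X) : Set (ℝ × X) := (γ.1 : Set (ℝ × X))

/-- The (compact) domain of a curve fragment. -/
def dom (γ : Fragment X) : Set ℝ := Prod.fst '' γ.graph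

/-- The image of a curve fragment. -/
def im (γ : Fragment X) : Set X := Prod.snd '' γ.graph

/-- The function `dom γ → X` determined by the graph (junk value off the domain). -/
def fn (γ : Fragment X) (t : ℝ) : X :=
  @dite X (∃ x, (t, x) ∈ γ.graph) (Classical.dec _)
    (fun h => h.choose) (fun _ => γ.1.nonempty.choose.2)

/-- `γ_* 𝓛¹`: the pushforward under `γ` of Lebesgue measure restricted to `dom γ`. -/
def measure [MeasurableSpace X] (γ : Fragment X) : Measure X :=
  (volume.restrict γ.dom).map γ.fn

end Fragment

/-- The measure `ν(ℙ)`, `ν(ℙ)(B) = ∫ γ_*𝓛¹(B) dℙ(γ)`. -/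
def nu [MeasurableSpace X] (ℙ : Measure (Fragment X)) : Measure X :=
  ℙ.bind Fragment.measure

/-- The cone `C(w,θ) = {v : |⟨v,w⟩| ≥ θ‖v‖}`. -/
def cone {n : ℕ} (w : E n) (θ : ℝ) : Set (E n) := {v | θ * ‖v‖ ≤ |⟪v, w⟫|}

/-- A cone in `ℝⁿ` is a set of the form `C(w,θ)` with `w ∈ Sⁿ⁻¹`, `θ ∈ (0,1)`. -/
def IsCone {n : ℕ} (C : Set (E n)) : Prop :=
  ∃ (w : E n) (θ : ℝ), ‖w‖ = 1 ∧ θ ∈ Set.Ioo (0:ℝ) 1 ∧ C = cone w θ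

/-- `γ` is a `C`-curve with respect to `φ`. -/
def IsConeCurve {n : ℕ} (φ : X → E n) (C : Set (E n)) (γ : Fragment X) : Prop :=
  ∃ δ > (0:ℝ), ∀ p ∈ γ.graph, ∀ q ∈ γ.graph,
    φ p.2 - φ q.2 ∈ C \ Metric.ball 0 (δ * |p.1 - q.1|)

/-- `ℙ` is a `C`-Alberti representation of `μ` with respect to `φ`. -/
def IsConeAlbertiRep [MeasurableSpace X] {n : ℕ} (μ : Measure X) (φ : X → E n)
    (C : Set (E n)) (ℙ : Measure (Fragment X)) : Prop :=
  IsProbabilityMeasure ℙ ∧ μ ≪ nu ℙ ∧ ∀ᵐ γ ∂ℙ, IsConeCurve φ C γ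

/-- `S` is `C`-null with respect to `φ`: every `C`-curve meets `S` in `𝓗¹`-measure zero. -/
def ConeNull [MeasurableSpace X] [BorelSpace X] {n : ℕ} (φ : X → E n) (C : Set (E n))
    (S : Set X) : Prop :=
  ∀ γ : Fragment X, IsConeCurve φ C γ → μH[1] (γ.im ∩ S) = 0

/-- Cones `C₁,…,C_m` are independent. -/
def IndepCones {n m : ℕ} (C : Fin m → Set (E n)) : Prop :=
  ∀ v : Fin m → E n, (∀ i, v i ∈ C i ∧ v i ≠ 0) → LinearIndependent ℝ v

/-- `μ` has `n` independent Alberti representations. -/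
def HasIndepAlberti [MeasurableSpace X] (μ : Measure X) (n : ℕ) : Prop :=
  ∃ φ : X → E n, (∃ K, LipschitzWith K φ) ∧ ∃ C : Fin n → Set (E n),
    (∀ i, IsCone (C i)) ∧ IndepCones C ∧ ∀ i, ∃ ℙ, IsConeAlbertiRep μ φ (C i) ℙ

/-- The collection `𝒮(φ)` of singular sets. -/
def MemScal [MeasurableSpace X] [BorelSpace X] {n : ℕ} (φ : X → E n) (S : Set X) : Prop :=
  MeasurableSet S ∧ ∀ θ ∈ Set.Ioo (0:ℝ) 1, ∃ (m : ℕ) (S' : Fin m → Set X) (w : Fin m → E n),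
    S = (⋃ i, S' i) ∧ ∀ i, MeasurableSet (S' i) ∧ ‖w i‖ = 1 ∧ ConeNull φ (cone (w i) θ) (S' i)

/-- `Lip(f,x) = limsup_{r→0⁺} sup_{d(x,y)≤r} |f(y)-f(x)|/r`. -/
def lipAt (f : X → ℝ) (x : X) : ℝ :=
  Filter.limsup (fun r : ℝ => sSup ((fun y => |f y - f x| / r) '' Metric.closedBall x r))
    (𝓝[>] (0:ℝ))

/-- `ind φ = {x : Lip(D⬝φ, x) > 0 for all D ∈ Sⁿ⁻¹}`. -/
def indSet {n : ℕ} (φ : X → E n) : Set X :=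
  {x | ∀ D : E n, ‖D‖ = 1 → 0 < lipAt (fun y => ⟪φ y, D⟫) x}

/-- `f` is differentiable with respect to `φ` at `x₀`, with a unique derivative. -/
def DiffWrtAt {n : ℕ} (φ : X → E n) (f : X → ℝ) (x₀ : X) : Prop :=
  ∃! L : E n →ₗ[ℝ] ℝ,
    Filter.Tendsto (fun x => |f x - f x₀ - L (φ x - φ x₀)| / dist x x₀) (𝓝[≠] x₀) (𝓝 0)

/-- `(X,d,μ)` is a Lipschitz differentiability space, with all chart dimensions
satisfying the predicate `P`. -/
def IsLipDiffSpaceWith [MeasurableSpace X] (μ : Measure X) (P : ℕ → Prop) : Prop :=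
  ∃ (N : ℕ → ℕ) (U : ℕ → Set X) (φ : (i : ℕ) → X → E (N i)),
    (∀ i, P (N i)) ∧ (∀ i, MeasurableSet (U i)) ∧ (⋃ i, U i) = Set.univ ∧
    (∀ i, ∃ K, LipschitzWith K (φ i)) ∧
    ∀ f : X → ℝ, (∃ K, LipschitzWith K f) →
      ∀ i, ∀ᵐ x ∂μ, x ∈ U i → DiffWrtAt (φ i) f x

/-- `ρ` is an upper gradient of `f`. -/
def IsUpperGradient (f ρ : X → ℝ) : Prop :=
  ∀ γ : ℝ → X, LipschitzOnWith 1 γ (Set.Icc 0 1) →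
    |f (γ 1) - f (γ 0)| ≤ ∫ t in Set.Icc (0:ℝ) 1, ρ (γ t)

/-- `ρ` is a `*`-upper gradient of `f`. -/
def IsStarUpperGradient (f ρ : X → ℝ) : Prop :=
  ∀ γ : Fragment X, LipschitzOnWith 1 γ.fn γ.dom →
    ∀ᵐ t ∂(volume.restrict γ.dom),
      ∀ v : ℝ, HasDerivWithinAt (f ∘ γ.fn) v γ.dom t → |v| ≤ ρ (γ.fn t)

/-- The dyadic cube of side length `2^{-m}` in `[0,1)ⁿ` indexed by `k`. -/
def dyadicCube (n m : ℕ) (k : Fin n → Fin (2 ^ m)) : Set (E n) :=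
  {x | ∀ i, (k i : ℝ) / 2 ^ m ≤ x i ∧ x i < ((k i : ℝ) + 1) / 2 ^ m}

variable {X : Type*} [MetricSpace X] [CompleteSpace X] [TopologicalSpace.SeparableSpace X]
  [MeasurableSpace X] [BorelSpace X]

/-!
If `dim_H X < n` and `φ : X → ℝⁿ` is Lipschitz, then `φ(X)` is `ℋˢ`-null for some `s < n`, so there
are measures of arbitrarily small mass which give each of its points a cube of mass at least of the
order of the power `s` of its side. Factoring the mass of a cube into conditional masses, one
coordinate of one level at a time, shows that some coordinate direction `j` has a disproportionate
share of it. A curve nearly parallel to the `j`-th axis meets few such cubes, so the set of points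
assigned to `j` is null on every such curve. Doing this in a dense sequence of linear coordinates,
and using that vectors not lying in a hyperplane contain a basis, confines the derivative at
`p ∈ φ(X)` of almost every curve to a hyperplane `w(p)ᗮ`. Hence, for vectors `w'` near `w(φ x)`, the
function `⟪φ, w'⟫` has a `*`-upper gradient which is small at `x`; by hypothesis so is its pointwise
Lipschitz constant, and the components of `φ` are dependent at almost every point. Consequently
there are maximal independent tuples of Lipschitz functions, of length at most `dim_H X`, and
adjoining any Lipschitz `f` to such a tuple gives a dependence which is the derivative of `f`.
-/

section Grid

variable {n : ℕ}

/-- The index of the half-open cube of side `b⁻ᵐ`, with vertices in `b⁻ᵐ ℤⁿ`, that contains `x`;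
the cube itself is `gridCell b m ⁻¹' {gridCell b m x}`. -/
def gridCell (b m : ℕ) (x : Fin n → ℝ) : Fin n → ℤ := fun i => ⌊(b : ℝ) ^ m * x i⌋

/-- The points of the level `m` cube of `x` whose level `m + 1` cube agrees with that of `x` in the
first `l` coordinates. As `l` runs from `0` to `n` this interpolates between the level `m` cube of
`x` and its level `m + 1` cube. -/
def partialCell (b m l : ℕ) (x : Fin n → ℝ) : Set (Fin n → ℝ) :=
  {y | gridCell b m y = gridCell b m x ∧
    ∀ i : Fin n, (i : ℕ) < l → gridCell b (m + 1) y i = gridCell b (m + 1) x i}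

/-- The conditional `α`-probability of the `l`-th coordinate of the level `m + 1` cube of `x`, given
the previous coordinates and the level `m` cube. -/
def condMass (α : Measure (Fin n → ℝ)) (b m l : ℕ) (x : Fin n → ℝ) : ℝ≥0∞ :=
  α (partialCell b m (l + 1) x) / α (partialCell b m l x)

/-- The share of the `l`-th coordinate direction in the mass of the level `m` cube of `x`: the
product of its conditional masses over all levels below `m`. -/
def gridWeight (α : Measure (Fin n → ℝ)) (b m l : ℕ) (x : Fin n → ℝ) : ℝ≥0∞ :=
  ∏ k ∈ Finset.range m, condMass α b k l x

lemma card_Icc_sub_one_add_one (c : Fin n → ℤ) : (Finset.Icc (c - 1) (c + 1)).card = 3 ^ n := by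
  have h : ∀ i, (c i + 1 + 1 - (c i - 1)).toNat = 3 := by omega
  simp [Pi.card_Icc, h]

lemma floor_mem_Icc_of_abs_sub_le {a c : ℝ} (h : |a - c| ≤ 1) :
    ⌊a⌋ ∈ Icc (⌊c⌋ - 1) (⌊c⌋ + 1) := by
  obtain ⟨h₁, h₂⟩ := abs_le.1 h
  rw [← Int.floor_sub_one, ← Int.floor_add_one]
  exact ⟨Int.floor_le_floor (by linarith), Int.floor_le_floor (by linarith)⟩

lemma measurable_gridCell (b m : ℕ) : Measurable (gridCell b m : (Fin n → ℝ) → Fin n → ℤ) :=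
  measurable_pi_lambda _ fun i => Int.measurable_floor.comp ((measurable_pi_apply i).const_mul _)

lemma measurableSet_partialCell (b m l : ℕ) (x : Fin n → ℝ) :
    MeasurableSet (partialCell b m l x) := by
  have coord (i : Fin n) : Measurable fun y : Fin n → ℝ => gridCell b (m + 1) y i :=
    (measurable_pi_apply i).comp (measurable_gridCell b (m + 1))
  rw [partialCell, ofPred_and, ofPred_forall]
  exact (measurable_gridCell b m (measurableSet_singleton _)).inter <|
    .iInter fun i => .imp (.const _) (coord i (measurableSet_singleton _))

lemma gridCell_eq_of_succ {b m : ℕ} (hb : 0 < b) {x y : Fin n → ℝ}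
    (h : gridCell b (m + 1) x = gridCell b (m + 1) y) : gridCell b m x = gridCell b m y := by
  have gridCell_div (z : Fin n → ℝ) (i) : gridCell b m z i = gridCell b (m + 1) z i / (b : ℤ) := by
    rw [gridCell, gridCell, ← Int.floor_div_natCast]
    congr 1
    field_simp
    ring
  funext i
  rw [gridCell_div, gridCell_div, h]

lemma gridCell_eq_of_le {b m k : ℕ} (hb : 0 < b) (hk : k ≤ m) {x y : Fin n → ℝ}
    (h : gridCell b m x = gridCell b m y) : gridCell b k x = gridCell b k y := by
  induction m, hk using Nat.le_induction with
  | base => exact h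
  | succ m _ ih => exact ih (gridCell_eq_of_succ hb h)

lemma partialCell_congr {b m l : ℕ} {x y : Fin n → ℝ} (h₀ : gridCell b m x = gridCell b m y)
    (h : ∀ i : Fin n, (i : ℕ) < l → gridCell b (m + 1) x i = gridCell b (m + 1) y i) :
    partialCell b m l x = partialCell b m l y := by
  ext z
  simp only [partialCell, mem_ofPred_eq, h₀]
  exact and_congr_right fun _ => forall₂_congr fun i hi => by rw [h i hi]

lemma partialCell_succ_subset (b m l : ℕ) (x : Fin n → ℝ) :
    partialCell b m (l + 1) x ⊆ partialCell b m l x :=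
  fun _ hy => ⟨hy.1, fun i hi => hy.2 i (hi.trans l.lt_succ_self)⟩

lemma gridWeight_congr (α : Measure (Fin n → ℝ)) {b m : ℕ} (hb : 0 < b) (l : ℕ)
    {x y : Fin n → ℝ} (h : gridCell b m x = gridCell b m y) :
    gridWeight α b m l x = gridWeight α b m l y := by
  refine Finset.prod_congr rfl fun k hk => ?_
  have h₁ := gridCell_eq_of_le hb (Finset.mem_range.1 hk) h
  have h₀ := gridCell_eq_of_succ hb h₁
  rw [condMass, condMass, partialCell_congr h₀ fun i _ => congrFun h₁ i,
    partialCell_congr h₀ fun i _ => congrFun h₁ i]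

lemma measurable_gridWeight (α : Measure (Fin n → ℝ)) {b : ℕ} (hb : 0 < b) (m l : ℕ) :
    Measurable (gridWeight α b m l) := by
  have h : (gridWeight α b m l).FactorsThrough (gridCell b m) :=
    fun _ _ hxy => gridWeight_congr α hb l hxy
  rw [← h.extend_comp (0 : (Fin n → ℤ) → ℝ≥0∞)]
  exact Measurable.of_discrete.comp (measurable_gridCell b m)

lemma measure_partialCell_le (α : Measure (Fin n → ℝ)) [IsFiniteMeasure α] (b m l : ℕ)
    (x : Fin n → ℝ) :
    α (partialCell b m l x) ≤
      (∏ i ∈ Finset.range l, condMass α b m i x) * α (partialCell b m 0 x) := by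
  induction l with
  | zero => simp
  | succ l ih =>
    calc α (partialCell b m (l + 1) x)
        = condMass α b m l x * α (partialCell b m l x) :=
          (ENNReal.div_mul_cancel' (measure_mono_null (partialCell_succ_subset b m l x))
            fun h => absurd h (measure_ne_top _ _)).symm
      _ ≤ condMass α b m l x *
          ((∏ i ∈ Finset.range l, condMass α b m i x) * α (partialCell b m 0 x)) := by gcongr
      _ = _ := by rw [Finset.prod_range_succ]; ring

lemma measure_gridCell_le (α : Measure (Fin n → ℝ)) [IsFiniteMeasure α] {b : ℕ} (hb : 0 < b)
    (m : ℕ) (x : Fin n → ℝ) :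
    α (gridCell b m ⁻¹' {gridCell b m x}) ≤ (∏ j : Fin n, gridWeight α b m j x) * α univ := by
  induction m with
  | zero => simpa [gridWeight] using measure_mono (subset_univ _)
  | succ m ih =>
    have hsub : gridCell b (m + 1) ⁻¹' {gridCell b (m + 1) x} ⊆ partialCell b m n x :=
      fun y hy => ⟨gridCell_eq_of_succ hb hy, fun i _ => congrFun hy i⟩
    have h₀ : partialCell b m 0 x = gridCell b m ⁻¹' {gridCell b m x} := by
      ext; simp [partialCell]
    calc α (gridCell b (m + 1) ⁻¹' {gridCell b (m + 1) x})
        ≤ α (partialCell b m n x) := measure_mono hsub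
      _ ≤ (∏ i ∈ Finset.range n, condMass α b m i x) * α (partialCell b m 0 x) :=
        measure_partialCell_le α b m n x
      _ ≤ (∏ i ∈ Finset.range n, condMass α b m i x) *
          ((∏ j : Fin n, gridWeight α b m j x) * α univ) := by rw [h₀]; gcongr
      _ = (∏ j : Fin n, gridWeight α b (m + 1) j x) * α univ := by
        simp only [gridWeight, Finset.prod_range_succ, Finset.prod_mul_distrib]
        rw [← Fin.prod_univ_eq_prod_range (fun i => condMass α b m i x)]
        ring

end Grid

section NarrowSets

variable {n : ℕ}

/-- All chords of `Γ` are nearly parallel to the `j`-th coordinate axis: they have slope at most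
`b⁻¹` with respect to it. -/
def IsNarrow (b : ℝ) (j : Fin n) (Γ : Set (Fin n → ℝ)) : Prop :=
  ∀ x ∈ Γ, ∀ y ∈ Γ, ∀ i ≠ j, b * |x i - y i| ≤ |x j - y j|

lemma IsNarrow.mono {b : ℝ} {j : Fin n} {Γ Γ' : Set (Fin n → ℝ)} (h : IsNarrow b j Γ)
    (hΓ : Γ' ⊆ Γ) : IsNarrow b j Γ' :=
  fun x hx y hy => h x (hΓ hx) y (hΓ hy)

lemma sum_condMass_le_one (α : Measure (Fin n → ℝ)) {b m : ℕ} (j : Fin n)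
    {S : Finset (Fin n → ℝ)} (hinj : InjOn (gridCell b (m + 1)) (S : Set (Fin n → ℝ)))
    (h₀ : ∀ x ∈ S, ∀ y ∈ S, gridCell b m x = gridCell b m y)
    (h₁ : ∀ x ∈ S, ∀ y ∈ S, ∀ i ≠ j, gridCell b (m + 1) x i = gridCell b (m + 1) y i) :
    ∑ x ∈ S, condMass α b m j x ≤ 1 := by
  rcases S.eq_empty_or_nonempty with rfl | ⟨x₀, hx₀⟩
  · simp
  have partialCell_eq : ∀ x ∈ S, partialCell b m j x = partialCell b m j x₀ := fun x hx =>
    partialCell_congr (h₀ x hx x₀ hx₀) fun i hi => h₁ x hx x₀ hx₀ i (by rintro rfl; omega)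
  have disjoint : (S : Set (Fin n → ℝ)).PairwiseDisjoint fun x => partialCell b m (j + 1) x := by
    refine fun x hx y hy hxy => Set.disjoint_left.2 fun z hzx hzy => hxy (hinj hx hy ?_)
    funext i
    rcases eq_or_ne i j with rfl | hi
    · rw [← hzx.2 i (Nat.lt_succ_self _), ← hzy.2 i (Nat.lt_succ_self _)]
    · exact h₁ x hx y hy i hi
  calc ∑ x ∈ S, condMass α b m j x
      = (∑ x ∈ S, α (partialCell b m (j + 1) x)) / α (partialCell b m j x₀) := by
        simp only [condMass, div_eq_mul_inv]
        rw [Finset.sum_mul]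
        exact Finset.sum_congr rfl fun x hx => by rw [partialCell_eq x hx]
    _ = α (⋃ x ∈ S, partialCell b m (j + 1) x) / α (partialCell b m j x₀) := by
        rw [measure_biUnion_finset disjoint fun x _ => measurableSet_partialCell b m _ x]
    _ ≤ α (partialCell b m j x₀) / α (partialCell b m j x₀) := by
        gcongr
        exact iUnion₂_subset fun x hx =>
          (partialCell_succ_subset b m j x).trans (partialCell_eq x hx).subset
    _ ≤ 1 := ENNReal.div_self_le_one

variable {b : ℕ} {j : Fin n}

lemma sum_condMass_le_of_isNarrow (α : Measure (Fin n → ℝ)) {m : ℕ} {S : Finset (Fin n → ℝ)}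
    (hS : IsNarrow b j (S : Set (Fin n → ℝ)))
    (h₀ : ∀ x ∈ S, ∀ y ∈ S, gridCell b m x = gridCell b m y)
    (hinj : InjOn (gridCell b (m + 1)) (S : Set (Fin n → ℝ))) :
    ∑ x ∈ S, condMass α b m j x ≤ 3 ^ n := by
  classical
  rcases S.eq_empty_or_nonempty with rfl | ⟨z, hz⟩
  · simp
  let offAxis (x : Fin n → ℝ) : Fin n → ℤ :=
    Function.update (gridCell b (m + 1) x) j (gridCell b (m + 1) z j)
  have offAxis_apply (x) {i} (hi : i ≠ j) : offAxis x i = gridCell b (m + 1) x i :=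
    Function.update_of_ne hi _ _
  have offAxis_mem : ∀ x ∈ S,
      offAxis x ∈ Finset.Icc (gridCell b (m + 1) z - 1) (gridCell b (m + 1) z + 1) := by
    refine fun x hx => Finset.mem_Icc.2 (forall_and.1 fun i => ?_)
    rcases eq_or_ne i j with rfl | hi
    · simp [offAxis]
    rw [offAxis_apply x hi]
    refine floor_mem_Icc_of_abs_sub_le ?_
    have hj : |(b : ℝ) ^ m * x j - b ^ m * z j| < 1 :=
      Int.abs_sub_lt_one_of_floor_eq_floor (congrFun (h₀ x hx z hz) j)
    rw [← mul_sub, abs_mul, abs_of_nonneg (by positivity)] at hj ⊢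
    calc (b : ℝ) ^ (m + 1) * |x i - z i| = b ^ m * (b * |x i - z i|) := by ring
      _ ≤ b ^ m * |x j - z j| := by gcongr; exact hS x hx z hz i hi
      _ ≤ 1 := hj.le
  rw [← Finset.sum_fiberwise_of_maps_to offAxis_mem]
  calc _ ≤ ∑ _c ∈ Finset.Icc (gridCell b (m + 1) z - 1) (gridCell b (m + 1) z + 1), (1 : ℝ≥0∞) := by
        refine Finset.sum_le_sum fun _ _ => sum_condMass_le_one α j
          (hinj.mono (Finset.filter_subset _ _)) (fun x hx y hy => ?_) (fun x hx y hy i hi => ?_)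
        · exact h₀ x (Finset.mem_filter.1 hx).1 y (Finset.mem_filter.1 hy).1
        · rw [← offAxis_apply x hi, ← offAxis_apply y hi, (Finset.mem_filter.1 hx).2,
            (Finset.mem_filter.1 hy).2]
    _ = 3 ^ n := by
      rw [Finset.sum_const, card_Icc_sub_one_add_one, nsmul_one]; norm_cast

lemma sum_gridWeight_le_of_isNarrow (α : Measure (Fin n → ℝ)) (hb : 0 < b) (m : ℕ)
    {S : Finset (Fin n → ℝ)} (hS : IsNarrow b j (S : Set (Fin n → ℝ)))
    (h₀ : ∀ x ∈ S, ∀ y ∈ S, gridCell b 0 x = gridCell b 0 y)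
    (hinj : InjOn (gridCell b m) (S : Set (Fin n → ℝ))) :
    ∑ x ∈ S, gridWeight α b m j x ≤ (3 ^ n) ^ m := by
  classical
  induction m generalizing S with
  | zero =>
    have hcard : S.card ≤ 1 := Finset.card_le_one.2 fun x hx y hy => hinj hx hy (h₀ x hx y hy)
    simpa [gridWeight] using (by exact_mod_cast hcard : (S.card : ℝ≥0∞) ≤ 1)
  | succ m ih =>
    obtain ⟨S', hS', hbij⟩ := exists_subset_bijOn (S : Set (Fin n → ℝ)) (gridCell b m)
    lift S' to Finset (Fin n → ℝ) using S.finite_toSet.subset hS'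
    have hmaps : ∀ x ∈ S, gridCell b m x ∈ S'.image (gridCell b m) := fun x hx => by
      simpa using hbij.surjOn (mem_image_of_mem (gridCell b m) hx)
    calc ∑ x ∈ S, gridWeight α b (m + 1) j x
        = ∑ z ∈ S', ∑ x ∈ S with gridCell b m x = gridCell b m z,
            gridWeight α b (m + 1) j x := by
          rw [← Finset.sum_fiberwise_of_maps_to hmaps, Finset.sum_image hbij.injOn]
      _ = ∑ z ∈ S', gridWeight α b m j z *
            ∑ x ∈ S with gridCell b m x = gridCell b m z, condMass α b m j x := by
          refine Finset.sum_congr rfl fun z _ => ?_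
          rw [Finset.mul_sum]
          refine Finset.sum_congr rfl fun x hx => ?_
          rw [← gridWeight_congr α hb j (Finset.mem_filter.1 hx).2, gridWeight, gridWeight,
            Finset.prod_range_succ]
      _ ≤ ∑ z ∈ S', gridWeight α b m j z * 3 ^ n := by
          gcongr with z
          refine sum_condMass_le_of_isNarrow α (hS.mono (Finset.filter_subset _ _))
            (fun x hx y hy => ?_) (hinj.mono (Finset.filter_subset _ _))
          rw [(Finset.mem_filter.1 hx).2, (Finset.mem_filter.1 hy).2]
      _ ≤ (3 ^ n) ^ m * 3 ^ n := by
          rw [← Finset.sum_mul]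
          gcongr
          exact ih (hS.mono hS') (fun x hx y hy => h₀ x (hS' hx) y (hS' hy)) hbij.injOn
      _ = _ := (pow_succ _ _).symm

lemma volume_image_eval_gridCell_le (hb : 0 < b) (j : Fin n) (m : ℕ) (q : Fin n → ℤ) :
    volume (Function.eval j '' (gridCell b m ⁻¹' {q})) ≤ (b : ℝ≥0∞)⁻¹ ^ m := by
  have hb' : (0 : ℝ) < b := Nat.cast_pos.2 hb
  have hsub : Function.eval j '' (gridCell b m ⁻¹' {q}) ⊆
      Ico (q j / (b : ℝ) ^ m) ((q j + 1) / (b : ℝ) ^ m) := by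
    rintro _ ⟨y, rfl, rfl⟩
    rw [mem_Ico, div_le_iff₀ (by positivity), lt_div_iff₀ (by positivity), mul_comm]
    exact ⟨Int.floor_le _, Int.lt_floor_add_one _⟩
  refine (measure_mono hsub).trans_eq ?_
  rw [Real.volume_Ico, ← _root_.sub_div, add_sub_cancel_left, one_div, ← inv_pow,
    ENNReal.ofReal_pow (by positivity), ENNReal.ofReal_inv_of_pos hb', ENNReal.ofReal_natCast]

lemma mul_volume_image_eval_le_of_isNarrow (α : Measure (Fin n → ℝ)) (hb : 0 < b) (m : ℕ)
    {Γ : Set (Fin n → ℝ)} (hΓ : IsNarrow b j Γ)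
    (h₀ : ∀ x ∈ Γ, ∀ y ∈ Γ, gridCell b 0 x = gridCell b 0 y)
    {c : ℝ≥0∞} (hc : ∀ x ∈ Γ, c ≤ gridWeight α b m j x) :
    c * volume (Function.eval j '' Γ) ≤ (3 ^ n / b) ^ m := by
  obtain ⟨S, hS, hbij⟩ := exists_subset_bijOn Γ (gridCell b m)
  have hScount : S.Countable := MapsTo.countable_of_injOn (mapsTo_univ _ _) hbij.injOn
    (to_countable _)
  have sum_le (s : Finset S) : ∑ x ∈ s, gridWeight α b m j x ≤ (3 ^ n) ^ m := by
    have hs : (s.map (.subtype _) : Set (Fin n → ℝ)) ⊆ S := by simp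
    simpa using sum_gridWeight_le_of_isNarrow α hb m (hΓ.mono (hs.trans hS))
      (fun x hx y hy => h₀ x (hS (hs hx)) y (hS (hs hy))) (hbij.injOn.mono hs)
  have hcov : Function.eval j '' Γ ⊆
      ⋃ x ∈ S, Function.eval j '' (gridCell b m ⁻¹' {gridCell b m x}) := by
    rintro _ ⟨y, hy, rfl⟩
    obtain ⟨x, hx, hxy⟩ := hbij.surjOn (mem_image_of_mem _ hy)
    exact mem_iUnion₂.2 ⟨x, hx, mem_image_of_mem _ hxy.symm⟩
  calc c * volume (Function.eval j '' Γ)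
      ≤ c * ∑' _ : S, (b : ℝ≥0∞)⁻¹ ^ m := by
        gcongr
        refine (measure_mono hcov).trans ((measure_biUnion_le _ hScount _).trans ?_)
        exact ENNReal.tsum_le_tsum fun x => volume_image_eval_gridCell_le hb j m _
    _ = (∑' _ : S, c) * (b : ℝ≥0∞)⁻¹ ^ m := by
        rw [← ENNReal.tsum_mul_left, ENNReal.tsum_mul_right]
    _ ≤ (∑' x : S, gridWeight α b m j x) * (b : ℝ≥0∞)⁻¹ ^ m := by
        gcongr with x
        exact hc x (hS x.2)
    _ ≤ (3 ^ n) ^ m * (b : ℝ≥0∞)⁻¹ ^ m := by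
        gcongr
        rw [ENNReal.tsum_eq_iSup_sum]
        exact iSup_le sum_le
    _ = (3 ^ n / b) ^ m := by rw [← mul_pow, div_eq_mul_inv]

/-- The points lying in some cube, at a level `m`, whose weight in the `j`-th direction is at least
`κ * c ^ m`. -/
def heavySet (α : Measure (Fin n → ℝ)) (b : ℕ) (c κ : ℝ≥0∞) (j : Fin n) : Set (Fin n → ℝ) :=
  {x | ∃ m, κ * c ^ m ≤ gridWeight α b m j x}

lemma measurableSet_heavySet (α : Measure (Fin n → ℝ)) (hb : 0 < b) (c κ : ℝ≥0∞) (j : Fin n) :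
    MeasurableSet (heavySet α b c κ j) := by
  rw [heavySet, ofPred_exists]
  exact .iUnion fun m => measurableSet_le measurable_const (measurable_gridWeight α hb m j)

lemma mul_volume_image_eval_heavySet_le (α : Measure (Fin n → ℝ)) (hb : 0 < b) {c κ : ℝ≥0∞}
    (hc : 2 * 3 ^ n ≤ c * b) (hc' : c ≠ ⊤) {Γ : Set (Fin n → ℝ)} (hΓ : IsNarrow b j Γ)
    (h₀ : ∀ x ∈ Γ, ∀ y ∈ Γ, gridCell b 0 x = gridCell b 0 y) (hsub : Γ ⊆ heavySet α b c κ j) :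
    κ * volume (Function.eval j '' Γ) ≤ 2 := by
  have hc₀ : c ≠ 0 := by rintro rfl; simp at hc
  have hratio : (3 ^ n / b : ℝ≥0∞) ≤ c * 2⁻¹ := by
    refine ENNReal.div_le_of_le_mul ?_
    rwa [mul_right_comm, ← div_eq_mul_inv, ENNReal.le_div_iff_mul_le (by simp) (by simp), mul_comm]
  let Γ' (m : ℕ) : Set (Fin n → ℝ) := {x ∈ Γ | κ * c ^ m ≤ gridWeight α b m j x}
  have level_le (m : ℕ) : κ * volume (Function.eval j '' Γ' m) ≤ 2⁻¹ ^ m := by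
    have h := mul_volume_image_eval_le_of_isNarrow α hb m (hΓ.mono (sep_subset _ _ : Γ' m ⊆ Γ))
      (fun x hx y hy => h₀ x hx.1 y hy.1) fun x hx => hx.2
    rw [← ENNReal.mul_le_mul_iff_right (pow_ne_zero m hc₀) (ENNReal.pow_ne_top hc'), ← mul_assoc,
      mul_comm (c ^ m) κ, ← mul_pow]
    exact h.trans (by gcongr)
  have hcov : Function.eval j '' Γ ⊆ ⋃ m, Function.eval j '' Γ' m := by
    rw [← image_iUnion]
    exact image_mono fun x hx => mem_iUnion.2 ((hsub hx).imp fun _ hm => ⟨hx, hm⟩)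
  calc κ * volume (Function.eval j '' Γ)
      ≤ κ * ∑' m, volume (Function.eval j '' Γ' m) := by
        gcongr
        exact (measure_mono hcov).trans (measure_iUnion_le _)
    _ ≤ ∑' m : ℕ, 2⁻¹ ^ m := by
        rw [← ENNReal.tsum_mul_left]
        exact ENNReal.tsum_le_tsum level_le
    _ = 2 := by rw [ENNReal.tsum_geometric, ENNReal.one_sub_inv_two, inv_inv]

end NarrowSets

section HausdorffNull

variable {n : ℕ}

lemma exists_cover_tsum_ediam_rpow_lt {Y : Type*} [EMetricSpace Y] [MeasurableSpace Y]
    [BorelSpace Y] {s : ℝ} (hs : 0 < s) {N : Set Y} (hN : μH[s] N = 0) {ε : ℝ≥0∞} (hε : ε ≠ 0) :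
    ∃ t : ℕ → Set Y, N ⊆ ⋃ k, t k ∧ (∀ k, ediam (t k) ≤ 1) ∧ ∑' k, ediam (t k) ^ s < ε := by
  have hlt : (⨅ (t : ℕ → Set Y) (_ : N ⊆ ⋃ k, t k) (_ : ∀ k, ediam (t k) ≤ 1),
      ∑' k, ⨆ _ : (t k).Nonempty, ediam (t k) ^ s) < ε := by
    rw [Measure.hausdorffMeasure_apply] at hN
    refine lt_of_le_of_lt ?_ (hN.trans_lt (pos_iff_ne_zero.2 hε))
    exact le_iSup₂ (f := fun (r : ℝ≥0∞) (_ : 0 < r) =>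
      ⨅ (t : ℕ → Set Y) (_ : N ⊆ ⋃ k, t k) (_ : ∀ k, ediam (t k) ≤ r),
      ∑' k, ⨆ _ : (t k).Nonempty, ediam (t k) ^ s) 1 zero_lt_one
  have hiSup (t : Set Y) : ⨆ _ : t.Nonempty, ediam t ^ s = ediam t ^ s := by
    rcases t.eq_empty_or_nonempty with rfl | ht
    · simp [hs]
    · exact iSup_pos ht
  simpa only [hiSup, iInf_lt_iff, exists_prop] using hlt

lemma exists_le_pow_and_pow_le_rpow_add {d r c : ℝ≥0∞} {s : ℝ} (hs : 0 ≤ s) (hd : d ≤ 1)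
    (hr₀ : r ≠ 0) (hr₁ : r < 1) (hc₁ : c < 1) (hc : c ≤ r ^ s) {ε : ℝ≥0∞} (hε : ε ≠ 0) :
    ∃ m, d ≤ r ^ m ∧ c ^ m ≤ r⁻¹ ^ s * d ^ s + ε := by
  classical
  rcases eq_or_ne d 0 with rfl | hd₀
  · obtain ⟨m, hm⟩ := ((ENNReal.tendsto_pow_atTop_nhds_zero_of_lt_one hc₁).eventually
      (gt_mem_nhds (pos_iff_ne_zero.2 hε))).exists
    exact ⟨m, zero_le, hm.le.trans le_add_self⟩
  have hex : ∃ m, r ^ m < d := ((ENNReal.tendsto_pow_atTop_nhds_zero_of_lt_one hr₁).eventually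
    (gt_mem_nhds (pos_iff_ne_zero.2 hd₀))).exists
  obtain ⟨m, hm⟩ : ∃ m, Nat.find hex = m + 1 :=
    Nat.exists_eq_succ_of_ne_zero fun h => (Nat.find_eq_zero hex).1 h |>.not_ge (by simpa using hd)
  have hlt : r ^ (m + 1) < d := hm ▸ Nat.find_spec hex
  refine ⟨m, not_lt.1 (Nat.find_min hex (by omega)), le_trans ?_ le_self_add⟩
  calc c ^ m ≤ (r ^ s) ^ m := by gcongr
    _ = (r ^ m) ^ s := by
      rw [← ENNReal.rpow_natCast, ← ENNReal.rpow_mul, mul_comm, ENNReal.rpow_mul,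
        ENNReal.rpow_natCast]
    _ = (r⁻¹ * r ^ (m + 1)) ^ s := by
      rw [pow_succ', ← mul_assoc, ENNReal.inv_mul_cancel hr₀ hr₁.ne_top, one_mul]
    _ ≤ (r⁻¹ * d) ^ s := by gcongr
    _ = r⁻¹ ^ s * d ^ s := ENNReal.mul_rpow_of_nonneg _ _ hs

lemma exists_finset_mapsTo_gridCell {b m : ℕ} (hb : 0 < b) {t : Set (Fin n → ℝ)}
    (ht : ediam t ≤ (b : ℝ≥0∞)⁻¹ ^ m) :
    ∃ Q : Finset (Fin n → ℤ), Q.card = 3 ^ n ∧ ∀ x ∈ t, gridCell b m x ∈ Q := by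
  rcases t.eq_empty_or_nonempty with rfl | ⟨y, hy⟩
  · exact ⟨_, card_Icc_sub_one_add_one 0, by simp⟩
  have hb' : (0 : ℝ) < b := Nat.cast_pos.2 hb
  refine ⟨_, card_Icc_sub_one_add_one (gridCell b m y),
    fun x hx => Finset.mem_Icc.2 (forall_and.1 fun i => floor_mem_Icc_of_abs_sub_le ?_)⟩
  have hxy : edist x y ≤ ENNReal.ofReal ((b : ℝ)⁻¹ ^ m) := by
    rw [ENNReal.ofReal_pow (by positivity), ENNReal.ofReal_inv_of_pos hb', ENNReal.ofReal_natCast]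
    exact (edist_le_ediam_of_mem hx hy).trans ht
  rw [edist_dist, ENNReal.ofReal_le_ofReal_iff (by positivity)] at hxy
  rw [← mul_sub, abs_mul, abs_of_nonneg (by positivity)]
  calc (b : ℝ) ^ m * |x i - y i| ≤ b ^ m * (b : ℝ)⁻¹ ^ m := by
        gcongr
        exact (dist_le_pi_dist x y i).trans hxy
    _ = 1 := by rw [← mul_pow, mul_inv_cancel₀ hb'.ne', one_pow]

lemma exists_measure_le_measure_gridCell {b : ℕ} (hb : 0 < b) (m : ℕ → ℕ) (w : ℕ → ℝ≥0∞)
    (Q : ℕ → Finset (Fin n → ℤ)) :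
    ∃ α : Measure (Fin n → ℝ), α univ = ∑' k, (Q k).card * w k ∧
      ∀ k, ∀ q ∈ Q k, w k ≤ α (gridCell b (m k) ⁻¹' {q}) := by
  let vertex (k : ℕ) (q : Fin n → ℤ) : Fin n → ℝ := fun i => q i / (b : ℝ) ^ m k
  have gridCell_vertex (k q) : gridCell b (m k) (vertex k q) = q := by
    have : (b : ℝ) ^ m k ≠ 0 := pow_ne_zero _ (Nat.cast_ne_zero.2 hb.ne')
    funext i
    rw [gridCell, mul_div_cancel₀ _ this, Int.floor_intCast]
  refine ⟨.sum fun k => w k • ∑ q ∈ Q k, .dirac (vertex k q), ?_, fun k q hq => ?_⟩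
  · rw [Measure.sum_apply _ MeasurableSet.univ]
    simp [Measure.finsetSum_apply, mul_comm]
  · calc w k = w k * Measure.dirac (vertex k q) (gridCell b (m k) ⁻¹' {q}) := by
          rw [Measure.dirac_apply_of_mem (mem_preimage.2 (gridCell_vertex k q)), mul_one]
      _ ≤ (w k • ∑ q ∈ Q k, Measure.dirac (vertex k q)) (gridCell b (m k) ⁻¹' {q}) := by
          rw [Measure.smul_apply, Measure.finsetSum_apply, smul_eq_mul]
          gcongr
          exact Finset.single_le_sum (f := fun q' => Measure.dirac (vertex k q')
            (gridCell b (m k) ⁻¹' {q})) (fun _ _ => zero_le) hq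
      _ ≤ _ := Measure.le_sum_apply _ _ |>.trans' (ENNReal.le_tsum k)

lemma exists_measure_of_hausdorffMeasure_eq_zero {s : ℝ} (hs : 0 < s) {b : ℕ} (hb : 1 < b)
    {c : ℝ≥0∞} (hc₁ : c < 1) (hc : c ≤ (b : ℝ≥0∞)⁻¹ ^ s) {N : Set (Fin n → ℝ)}
    (hN : μH[s] N = 0) {η : ℝ≥0∞} (hη : η ≠ 0) :
    ∃ α : Measure (Fin n → ℝ), α univ < η ∧
      ∀ x ∈ N, ∃ m, c ^ m ≤ α (gridCell b m ⁻¹' {gridCell b m x}) := by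
  have hb₀ : 0 < b := by omega
  set r : ℝ≥0∞ := (b : ℝ≥0∞)⁻¹
  have hr₀ : r ≠ 0 := ENNReal.inv_ne_zero.2 (ENNReal.natCast_ne_top b)
  have hr₁ : r < 1 := ENNReal.inv_lt_one.2 (by exact_mod_cast hb)
  have hB₀ : r⁻¹ ^ s ≠ 0 := (ENNReal.rpow_pos_of_nonneg (by simpa using hr₁.ne_top) hs.le).ne'
  have hBt : r⁻¹ ^ s ≠ ⊤ := ENNReal.rpow_ne_top_of_nonneg hs.le (by simpa using hr₀)
  have h3t : (3 ^ n : ℝ≥0∞) ≠ ⊤ := by finiteness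
  set δ : ℝ≥0∞ := η / 3 ^ n / 2
  have hδ : δ ≠ 0 := by simp [δ, hη, h3t]
  obtain ⟨ε, hε₀, hε⟩ := ENNReal.exists_pos_sum_of_countable' hδ ℕ
  obtain ⟨t, hNt, htd, hts⟩ := exists_cover_tsum_ediam_rpow_lt hs hN (ε := δ / r⁻¹ ^ s)
    (ENNReal.div_ne_zero.2 ⟨hδ, hBt⟩)
  choose m hm hcm using fun k =>
    exists_le_pow_and_pow_le_rpow_add hs.le (htd k) hr₀ hr₁ hc₁ hc (hε₀ k).ne'
  choose Q hQ hmem using fun k => exists_finset_mapsTo_gridCell hb₀ (hm k)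
  obtain ⟨α, hα, hαQ⟩ := exists_measure_le_measure_gridCell hb₀ m (fun k => c ^ m k) Q
  refine ⟨α, ?_, fun x hx => ?_⟩
  · calc α univ = 3 ^ n * ∑' k, c ^ m k := by simp [hα, hQ, ENNReal.tsum_mul_left]
      _ ≤ 3 ^ n * (r⁻¹ ^ s * (∑' k, ediam (t k) ^ s) + ∑' k, ε k) := by
        rw [← ENNReal.tsum_mul_left (a := r⁻¹ ^ s), ← ENNReal.tsum_add]
        gcongr with k
        exact hcm k
      _ < 3 ^ n * (r⁻¹ ^ s * (δ / r⁻¹ ^ s) + δ) := by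
        gcongr
      _ = η := by
        rw [ENNReal.mul_div_cancel hB₀ hBt, ENNReal.add_halves,
          ENNReal.mul_div_cancel (by positivity) h3t]
  · obtain ⟨k, hk⟩ := mem_iUnion.1 (hNt hx)
    exact ⟨m k, hαQ k _ (hmem k x hk)⟩

/-- Every narrow subset of `T` projects to a null set of the `j`-th coordinate axis. -/
def IsNarrowNull (b : ℝ) (j : Fin n) (T : Set (Fin n → ℝ)) : Prop :=
  ∀ Γ ⊆ T, IsNarrow b j Γ → volume (Function.eval j '' Γ) = 0

lemma isNarrowNull_limsup_heavySet {b : ℕ} (hb : 0 < b) {c : ℝ≥0∞} (hc : 2 * 3 ^ n ≤ c * b)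
    (hc' : c ≠ ⊤) (α : ℕ → Measure (Fin n → ℝ)) (j : Fin n) :
    IsNarrowNull b j (limsup (fun i => heavySet (α i) b c (2 ^ i) j) atTop) := by
  intro Γ hΓ hnarrow
  let Γ' (q : Fin n → ℤ) : Set (Fin n → ℝ) := Γ ∩ gridCell b 0 ⁻¹' {q}
  have hcov : Function.eval j '' Γ ⊆ ⋃ q, Function.eval j '' Γ' q := by
    rw [← image_iUnion]
    exact image_mono fun x hx => mem_iUnion.2 ⟨_, hx, rfl⟩
  refine measure_mono_null hcov (measure_iUnion_null fun q => ?_)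
  let proj (i : ℕ) : Set ℝ := Function.eval j '' (Γ' q ∩ heavySet (α i) b c (2 ^ i) j)
  have volume_proj_le (i : ℕ) : volume (proj i) ≤ 2 * 2⁻¹ ^ i := by
    rw [← ENNReal.inv_pow, ← div_eq_mul_inv, ENNReal.le_div_iff_mul_le (by simp) (by simp),
      mul_comm]
    exact mul_volume_image_eval_heavySet_le (α i) hb hc hc'
      (hnarrow.mono (inter_subset_left.trans inter_subset_left))
      (fun x hx y hy => hx.1.2.trans hy.1.2.symm) inter_subset_right
  refine measure_mono_null (t := limsup proj atTop) ?_ (measure_limsup_atTop_eq_zero ?_)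
  · rintro _ ⟨x, hx, rfl⟩
    have hfreq := hΓ hx.1
    rw [mem_limsup_iff_frequently_mem] at hfreq ⊢
    exact hfreq.mono fun i hi => ⟨x, ⟨hx, hi⟩, rfl⟩
  · refine ne_top_of_le_ne_top ?_ (ENNReal.tsum_le_tsum volume_proj_le)
    rw [ENNReal.tsum_mul_left, ENNReal.tsum_geometric, ENNReal.one_sub_inv_two, inv_inv]
    finiteness

/-- If the mass of the cube is larger than the product of the desired lower bounds on its `n`
weights, one of these bounds holds. -/
lemma exists_mem_heavySet {b : ℕ} (hb : 0 < b) {c κ : ℝ≥0∞} (hc₀ : c ≠ 0) (hc' : c ≠ ⊤)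
    {α : Measure (Fin n → ℝ)} (hα : κ ^ n * α univ < 1) (hα' : α univ ≠ ⊤) {x : Fin n → ℝ} {m : ℕ}
    (hx : (c ^ n) ^ m ≤ α (gridCell b m ⁻¹' {gridCell b m x})) :
    ∃ j, x ∈ heavySet α b c κ j := by
  have : IsFiniteMeasure α := ⟨hα'.lt_top⟩
  by_contra! hlight
  have hprod : ∏ j : Fin n, gridWeight α b m j x ≤ (κ * c ^ m) ^ n := by
    simpa using Finset.prod_le_prod' (s := Finset.univ) fun j _ =>
      (not_le.1 fun h => hlight j ⟨m, h⟩).le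
  have hle : (c ^ n) ^ m ≤ (c ^ n) ^ m * (κ ^ n * α univ) :=
    calc (c ^ n) ^ m ≤ (∏ j : Fin n, gridWeight α b m j x) * α univ :=
          hx.trans (measure_gridCell_le α hb m x)
      _ ≤ (κ * c ^ m) ^ n * α univ := by gcongr
      _ = (c ^ n) ^ m * (κ ^ n * α univ) := by ring
  refine hle.not_gt (ENNReal.mul_lt_of_lt_div' ?_)
  rwa [ENNReal.div_self (pow_ne_zero _ (pow_ne_zero _ hc₀))
    (ENNReal.pow_ne_top (ENNReal.pow_ne_top hc'))]

/-- Since `s < n`, the loss `2 * 3 ^ n` in each of the `n` directions is absorbed by a large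
base. -/
lemma exists_base_div_pow_le_rpow {s : ℝ} (hs : s < n) (K : ℝ≥0) :
    ∃ b : ℕ, (K : ℝ≥0∞) < b ∧ ((K : ℝ≥0∞) / b) ^ n ≤ (b : ℝ≥0∞)⁻¹ ^ s := by
  have hpos : 0 < (n : ℝ) - s := by linarith
  have htop : Tendsto (fun k : ℕ => (k : ℝ≥0∞) ^ ((n : ℝ) - s)) atTop (𝓝 ⊤) := by
    have := (ENNReal.continuous_rpow_const (y := (n : ℝ) - s)).tendsto ⊤
    rw [ENNReal.top_rpow_of_pos hpos] at this
    exact this.comp ENNReal.tendsto_nat_nhds_top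
  obtain ⟨b, hKb, hb⟩ := ((ENNReal.tendsto_nat_nhds_top.eventually
    (lt_mem_nhds (ENNReal.coe_lt_top (r := K)))).and (htop.eventually
      (lt_mem_nhds (ENNReal.pow_lt_top (ENNReal.coe_lt_top (r := K)) (n := n))))).exists
  have hb₀ : (b : ℝ≥0∞) ≠ 0 := (zero_le.trans_lt hKb).ne'
  refine ⟨b, hKb, ?_⟩
  calc ((K : ℝ≥0∞) / b) ^ n = (K : ℝ≥0∞) ^ n * (b : ℝ≥0∞) ^ (-n : ℝ) := by
        rw [div_eq_mul_inv, mul_pow, ← ENNReal.rpow_natCast (b : ℝ≥0∞)⁻¹, ENNReal.inv_rpow,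
          ENNReal.rpow_neg]
    _ ≤ (b : ℝ≥0∞) ^ ((n : ℝ) - s) * (b : ℝ≥0∞) ^ (-n : ℝ) := by gcongr
    _ = (b : ℝ≥0∞)⁻¹ ^ s := by
        rw [← ENNReal.rpow_add _ _ hb₀ (ENNReal.natCast_ne_top b), ENNReal.inv_rpow,
          ← ENNReal.rpow_neg]
        congr 1
        ring

theorem exists_isNarrowNull_cover {s : ℝ} (hs : 0 < s) (hsn : s < n) :
    ∃ b : ℝ, ∀ N : Set (Fin n → ℝ), μH[s] N = 0 → ∃ T : Fin n → Set (Fin n → ℝ),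
      (∀ j, MeasurableSet (T j)) ∧ (∀ j, IsNarrowNull b j (T j)) ∧ N ⊆ ⋃ j, T j := by
  obtain ⟨b, hKb, hbs⟩ := exists_base_div_pow_le_rpow hsn (2 * 3 ^ n)
  push_cast at hKb hbs
  have hn : n ≠ 0 := by rintro rfl; norm_num at hsn; linarith
  have hb₁ : 1 < b := by
    have : 2 * 3 ^ n < b := by exact_mod_cast hKb
    have := Nat.one_le_pow n 3 (by simp)
    omega
  have hb₀ : (b : ℝ≥0∞) ≠ 0 := (zero_le.trans_lt hKb).ne'
  have hbt : (b : ℝ≥0∞) ≠ ⊤ := ENNReal.natCast_ne_top b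
  set c : ℝ≥0∞ := 2 * 3 ^ n / b
  have hcb : c * b = 2 * 3 ^ n := ENNReal.div_mul_cancel hb₀ hbt
  have hc₀ : c ≠ 0 := by simp [c, hbt]
  have hc₁ : c < 1 := by rwa [ENNReal.div_lt_iff (.inl hb₀) (.inl hbt), one_mul]
  refine ⟨b, fun N hN => ?_⟩
  have exists_heavy (i : ℕ) : ∃ α : Measure (Fin n → ℝ),
      ∀ x ∈ N, ∃ j, x ∈ heavySet α b c (2 ^ i) j := by
    obtain ⟨α, hα, hαN⟩ := exists_measure_of_hausdorffMeasure_eq_zero hs hb₁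
      (pow_lt_one₀ zero_le hc₁ hn) hbs hN (η := 1 / (2 ^ i) ^ n) (by simp)
    exact ⟨α, fun x hx => (hαN x hx).elim fun m hm => exists_mem_heavySet (by omega) hc₀ hc₁.ne_top
      (ENNReal.mul_lt_of_lt_div' hα) hα.ne_top hm⟩
  choose α hα using exists_heavy
  refine ⟨fun j => limsup (fun i => heavySet (α i) b c (2 ^ i) j) atTop, fun j => ?_, fun j => ?_,
    fun x hx => ?_⟩
  · exact .measurableSet_limsup fun i => measurableSet_heavySet _ (by omega) _ _ _
  · exact isNarrowNull_limsup_heavySet (by omega) hcb.ge hc₁.ne_top α j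
  · by_contra hcon
    simp only [mem_iUnion, mem_limsup_iff_frequently_mem, not_exists, not_frequently] at hcon
    obtain ⟨i, hi⟩ := (eventually_all.2 hcon).exists
    obtain ⟨j, hj⟩ := hα i x hx
    exact hi j hj

end HausdorffNull

section Directions

variable {n : ℕ}

/-- A countable basis of the topology splits `A` into countably many sets on each of which a single
relation holds between any two points. -/
lemma measure_eq_zero_of_eventually_rel {Y ι : Type*} [TopologicalSpace Y]
    [SecondCountableTopology Y] [MeasurableSpace Y] [Countable ι] {μ : Measure Y} {A : Set Y}
    {R : ι → Y → Y → Prop} (hR : ∀ t ∈ A, ∃ k, ∀ᶠ r in 𝓝[A] t, R k r t)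
    (hμ : ∀ k, ∀ B ⊆ A, (∀ r ∈ B, ∀ t ∈ B, R k r t) → μ B = 0) : μ A = 0 := by
  have hbasis := TopologicalSpace.isBasis_countableBasis Y
  have hcover : A ⊆ ⋃ k, ⋃ u ∈ TopologicalSpace.countableBasis Y,
      {t ∈ A ∩ u | ∀ r ∈ A ∩ u, R k r t} := fun t ht => by
    obtain ⟨k, hk⟩ := hR t ht
    obtain ⟨u, hu, htu, hsub⟩ := hbasis.mem_nhds_iff.1 (eventually_nhdsWithin_iff.1 hk)
    exact mem_iUnion.2 ⟨k, mem_iUnion₂.2 ⟨u, hu, ⟨ht, htu⟩, fun r hr => hsub hr.2 hr.1⟩⟩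
  refine measure_mono_null hcover (measure_iUnion_null fun k =>
    (measure_biUnion_null_iff (TopologicalSpace.countable_countableBasis Y)).2 fun u _ => ?_)
  exact hμ k _ (fun t ht => ht.1.1) fun r hr t ht => ht.2 r hr.1

lemma hausdorffMeasure_eq_zero_of_antilipschitzWith_domRestrict {Y Z : Type*} [EMetricSpace Y]
    [EMetricSpace Z] [MeasurableSpace Y] [BorelSpace Y] [MeasurableSpace Z] [BorelSpace Z]
    {K : ℝ≥0} {g : Y → Z} {A : Set Y} (hg : AntilipschitzWith K (A.domRestrict g)) {d : ℝ}
    (hd : 0 ≤ d) (hA : μH[d] (g '' A) = 0) : μH[d] A = 0 := by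
  have hle := hg.le_hausdorffMeasure_image hd univ
  rw [image_univ, range_domRestrict, hA, mul_zero] at hle
  have himg := isometry_subtype_coe.hausdorffMeasure_image (.inl hd) (univ : Set A)
  rw [image_univ, Subtype.range_coe] at himg
  exact le_antisymm (himg.trans_le hle) zero_le

/-- The open cone of vectors nearly parallel to the `j`-th axis. -/
def axisCone (b : ℝ) (j : Fin n) : Set (Fin n → ℝ) := {v | v j ≠ 0 ∧ ∀ i ≠ j, b * |v i| < |v j|}

lemma isOpen_axisCone (b : ℝ) (j : Fin n) : IsOpen (axisCone b j) := by
  simp only [axisCone, ofPred_and, ofPred_forall]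
  exact (isOpen_ne_fun (by fun_prop) (by fun_prop)).inter (isOpen_iInter_of_finite fun i =>
    isOpen_iInter_of_finite fun _ => isOpen_lt (by fun_prop) (by fun_prop))

lemma smul_mem_axisCone_iff {b : ℝ} {j : Fin n} {c : ℝ} (hc : c ≠ 0) {v : Fin n → ℝ} :
    c • v ∈ axisCone b j ↔ v ∈ axisCone b j := by
  simp [axisCone, abs_mul, hc, mul_left_comm b]

lemma single_one_mem_axisCone (b : ℝ) (j : Fin n) : Pi.single j 1 ∈ axisCone b j :=
  ⟨by simp, fun i hi => by simp [hi]⟩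

lemma eventually_sub_mem_axisCone {ψ : ℝ → Fin n → ℝ} {v : Fin n → ℝ} {s : Set ℝ} {t b : ℝ}
    {j : Fin n} (hψ : HasDerivWithinAt ψ v s t) (hv : v ∈ axisCone b j) :
    ∃ k : ℕ, ∀ᶠ r in 𝓝[s] t,
      (∀ i ≠ j, b * |ψ r i - ψ t i| ≤ |ψ r j - ψ t j|) ∧ |r - t| ≤ k * |ψ r j - ψ t j| := by
  obtain ⟨k, hk⟩ := exists_nat_gt |v j|⁻¹
  have hk' : 1 < k * |v j| := (inv_lt_iff_one_lt_mul₀ (abs_pos.2 hv.1)).1 hk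
  have hslope := hasDerivWithinAt_iff_tendsto_slope.1 hψ
  have hcone : ∀ᶠ r in 𝓝[s \ {t}] t, slope ψ t r ∈ axisCone b j :=
    hslope.eventually ((isOpen_axisCone b j).mem_nhds hv)
  have hlong : ∀ᶠ r in 𝓝[s \ {t}] t, 1 < k * |slope ψ t r j| :=
    hslope.eventually ((isOpen_lt continuous_const (by fun_prop :
      Continuous fun u : Fin n → ℝ => k * |u j|)).mem_nhds hk')
  refine ⟨k, nhdsWithin_mono t (s.subset_insert_sdiff_singleton t) ?_⟩
  rw [nhdsWithin_insert, mem_sup]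
  refine ⟨by simp, ?_⟩
  filter_upwards [hcone, hlong, self_mem_nhdsWithin] with r hr hr' hrt
  have hne : r - t ≠ 0 := sub_ne_zero.2 hrt.2
  rw [slope_def_module, smul_mem_axisCone_iff (inv_ne_zero hne)] at hr
  refine ⟨fun i hi => (hr.2 i hi).le, ?_⟩
  rw [slope_def_module, Pi.smul_apply, smul_eq_mul, abs_mul, abs_inv, mul_left_comm,
    lt_inv_mul_iff₀ (abs_pos.2 hne), mul_one] at hr'
  exact hr'.le

/-- Curves with derivative in `O` spend no time in `A`. The parameter set of a curve is an
arbitrary subset of `ℝ`, so that no extension of curve fragments is needed. -/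
def IsTangentNull {F : Type*} [NormedAddCommGroup F] [NormedSpace ℝ F] (A O : Set F) : Prop :=
  ∀ (ψ : ℝ → F) (s : Set ℝ), volume {t ∈ s | ψ t ∈ A ∧ ∃ v ∈ O, HasDerivWithinAt ψ v s t} = 0

lemma IsTangentNull.preimage {F G : Type*} [NormedAddCommGroup F] [NormedSpace ℝ F]
    [NormedAddCommGroup G] [NormedSpace ℝ G] {A O : Set G} (h : IsTangentNull A O)
    (L : F →L[ℝ] G) : IsTangentNull (L ⁻¹' A) (L ⁻¹' O) := fun ψ s =>
  measure_mono_null (fun t ht => ht.imp_right fun ⟨hA, v, hv, hψ⟩ =>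
    ⟨hA, L v, hv, L.hasFDerivAt.comp_hasDerivWithinAt t hψ⟩) (h (L ∘ ψ) s)

lemma IsNarrowNull.isTangentNull {b : ℝ} {j : Fin n} {T : Set (Fin n → ℝ)}
    (hT : IsNarrowNull b j T) : IsTangentNull T (axisCone b j) := by
  intro ψ s
  refine measure_eq_zero_of_eventually_rel (R := fun (k : ℕ) r t =>
    (∀ i ≠ j, b * |ψ r i - ψ t i| ≤ |ψ r j - ψ t j|) ∧ |r - t| ≤ k * |ψ r j - ψ t j|) ?_ ?_
  · rintro t ⟨-, -, v, hv, hψ⟩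
    exact (eventually_sub_mem_axisCone hψ hv).imp fun k hk => hk.filter_mono
      (nhdsWithin_mono t fun r hr => hr.1)
  · intro k B hB hrel
    have hnarrow : IsNarrow b j (ψ '' B) := by
      rintro _ ⟨r, hr, rfl⟩ _ ⟨t, ht, rfl⟩
      exact (hrel r hr t ht).1
    have hnull := hT (ψ '' B) (by rintro _ ⟨t, ht, rfl⟩; exact (hB ht).2.1) hnarrow
    rw [image_image, ← hausdorffMeasure_real] at hnull
    rw [← hausdorffMeasure_real]
    refine hausdorffMeasure_eq_zero_of_antilipschitzWith_domRestrict (K := k)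
      (AntilipschitzWith.of_le_mul_dist fun r t => ?_) zero_le_one hnull
    exact (hrel r r.2 t t.2).2

lemma exists_denseSeq_apply_mem_axisCone {F : Type*} [NormedAddCommGroup F] [NormedSpace ℝ F]
    [FiniteDimensional ℝ F] (u : Module.Basis (Fin n) ℝ F) (b : ℝ) :
    ∃ k, ∀ j, TopologicalSpace.denseSeq (F →L[ℝ] Fin n → ℝ) k (u j) ∈ axisCone b j := by
  have hopen : IsOpen {L : F →L[ℝ] Fin n → ℝ | ∀ j, L (u j) ∈ axisCone b j} := by
    simp only [ofPred_forall]
    exact isOpen_iInter_of_finite fun j => (isOpen_axisCone b j).preimage (by fun_prop)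
  have hu : ∀ j, (u.equivFunL : F →L[ℝ] Fin n → ℝ) (u j) ∈ axisCone b j := fun j => by
    have hj : (u.equivFunL : F →L[ℝ] Fin n → ℝ) (u j) = Pi.single j 1 := by
      ext i
      simp [Module.Basis.equivFunL, Pi.single_apply, eq_comm]
    exact hj ▸ single_one_mem_axisCone b j
  obtain ⟨_, hL, k, rfl⟩ := (TopologicalSpace.denseRange_denseSeq _).inter_open_nonempty _ hopen
    ⟨_, hu⟩
  exact ⟨k, hL⟩

lemma exists_orthogonal_of_forall_denseSeq_notMem_axisCone (b : ℝ) (V : Set (E n))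
    (hV : ∀ k, ∃ j, ∀ v ∈ V,
      TopologicalSpace.denseSeq (E n →L[ℝ] Fin n → ℝ) k v ∉ axisCone b j) :
    ∃ w : E n, ‖w‖ = 1 ∧ ∀ v ∈ V, ⟪v, w⟫ = 0 := by
  have hspan : Submodule.span ℝ V ≠ ⊤ := fun hspan => by
    let u := Module.Basis.ofSpan hspan.ge
    let e := u.indexEquiv (EuclideanSpace.basisFun (Fin n) ℝ).toBasis
    obtain ⟨k, hk⟩ := exists_denseSeq_apply_mem_axisCone (u.reindex e) b
    obtain ⟨j, hj⟩ := hV k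
    refine hj _ ?_ (hk j)
    rw [u.reindex_apply]
    exact Module.Basis.ofSpan_subset hspan.ge (mem_range_self _)
  obtain ⟨w, hw, hw₀⟩ := Submodule.exists_mem_ne_zero_of_ne_bot
    (mt Submodule.orthogonal_eq_bot_iff.1 hspan)
  refine ⟨‖w‖⁻¹ • w, norm_smul_inv_norm hw₀, fun v hv => ?_⟩
  rw [inner_smul_right, hw v (Submodule.subset_span hv), mul_zero]

theorem exists_isTangentNull_of_hausdorffMeasure_eq_zero {s : ℝ} (hs : 0 < s) (hsn : s < n)
    {N : Set (E n)} (hN : μH[s] N = 0) :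
    ∃ A O : ℕ × Fin n → Set (E n), (∀ i, MeasurableSet (A i)) ∧ (∀ i, IsOpen (O i)) ∧
      (∀ i, IsTangentNull (A i) (O i)) ∧
      ∀ x ∈ N, ∃ w : E n, ‖w‖ = 1 ∧ ∀ v, (∀ i, x ∈ A i → v ∉ O i) → ⟪v, w⟫ = 0 := by
  obtain ⟨b, hb⟩ := exists_isNarrowNull_cover hs hsn
  let L := TopologicalSpace.denseSeq (E n →L[ℝ] Fin n → ℝ)
  have hLN : ∀ k, μH[s] (L k '' N) = 0 := fun k => le_antisymm
    (((L k).lipschitz.lipschitzOnWith.hausdorffMeasure_image_le hs.le).trans_eq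
      (by rw [hN, mul_zero])) zero_le
  choose T hTm hT hNT using fun k => hb _ (hLN k)
  refine ⟨fun i => L i.1 ⁻¹' T i.1 i.2, fun i => L i.1 ⁻¹' axisCone b i.2,
    fun i => (L i.1).measurable (hTm i.1 i.2),
    fun i => (isOpen_axisCone b i.2).preimage (L i.1).continuous,
    fun i => (hT i.1 i.2).isTangentNull.preimage (L i.1), fun x hx => ?_⟩
  refine exists_orthogonal_of_forall_denseSeq_notMem_axisCone b
    {v | ∀ i : ℕ × Fin n, L i.1 x ∈ T i.1 i.2 → L i.1 v ∉ axisCone b i.2} fun k => ?_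
  obtain ⟨j, hj⟩ := mem_iUnion.1 (hNT k (mem_image_of_mem _ hx))
  exact ⟨j, fun v hv => hv (k, j) hj⟩

end Directions

section PointwiseLipschitz

variable {Y : Type*} [MetricSpace Y]

lemma eventually_le_of_lipAt_lt {g : Y → ℝ} {K : ℝ≥0} (hg : LipschitzWith K g) {x : Y} {c : ℝ}
    (h : lipAt g x < c) : ∀ᶠ y in 𝓝 x, |g y - g x| ≤ c * dist y x := by
  have hK : ∀ r > 0, ∀ y ∈ closedBall x r, |g y - g x| / r ≤ K := fun r hr y hy => by
    rw [div_le_iff₀ hr]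
    exact (hg.dist_le_mul y x).trans (by gcongr; exact hy)
  have hbdd : IsBoundedUnder (· ≤ ·) (𝓝[>] (0 : ℝ))
      fun r : ℝ => sSup ((fun y => |g y - g x| / r) '' closedBall x r) := by
    refine isBoundedUnder_of_eventually_le (a := (K : ℝ)) ?_
    filter_upwards [eventually_mem_nhdsWithin] with r hr
    exact Real.sSup_le (by rintro _ ⟨y, hy, rfl⟩; exact hK r hr y hy) K.2
  obtain ⟨ε, hε, hεr⟩ := mem_nhdsGT_iff_exists_Ioo_subset.1 (eventually_lt_of_limsup_lt h hbdd)
  filter_upwards [ball_mem_nhds x hε] with y hy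
  rcases eq_or_ne y x with rfl | hyx
  · simp
  · have hr : 0 < dist y x := dist_pos.2 hyx
    rw [← div_le_iff₀ hr]
    have hbdd : BddAbove ((fun z => |g z - g x| / dist y x) '' closedBall x (dist y x)) :=
      ⟨K, by rintro _ ⟨z, hz, rfl⟩; exact hK _ hr z hz⟩
    exact (le_csSup hbdd (mem_image_of_mem _ (mem_closedBall.2 le_rfl))).trans (hεr ⟨hr, hy⟩).le

lemma lipAt_le_of_eventually_le {g : Y → ℝ} {x : Y} {c : ℝ} (hc : 0 ≤ c)
    (h : ∀ᶠ y in 𝓝 x, |g y - g x| ≤ c * dist y x) : lipAt g x ≤ c := by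
  obtain ⟨δ, hδ, hball⟩ := Metric.eventually_nhds_iff_ball.1 h
  refine limsup_le_of_le ?_ ?_
  · refine IsBoundedUnder.isCoboundedUnder_le (isBoundedUnder_of_eventually_ge (a := 0) ?_)
    filter_upwards [self_mem_nhdsWithin] with r hr
    exact Real.sSup_nonneg (by rintro _ ⟨y, -, rfl⟩; exact div_nonneg (abs_nonneg _) hr.le)
  · filter_upwards [Ioo_mem_nhdsGT hδ] with r hr
    refine Real.sSup_le ?_ hc
    rintro _ ⟨y, hy, rfl⟩
    rw [div_le_iff₀ hr.1]
    exact (hball y (closedBall_subset_ball hr.2 hy)).trans (by gcongr; exact hy)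

lemma lipAt_nonpos_iff_isLittleO {g : Y → ℝ} {K : ℝ≥0} (hg : LipschitzWith K g) {x : Y} :
    lipAt g x ≤ 0 ↔ (fun y => g y - g x) =o[𝓝 x] fun y => dist y x := by
  simp only [Asymptotics.isLittleO_iff, Real.norm_eq_abs, abs_dist]
  exact ⟨fun h c hc => eventually_le_of_lipAt_lt hg (h.trans_lt hc), fun h =>
    le_of_forall_pos_le_add fun c hc => (lipAt_le_of_eventually_le hc.le (h hc)).trans (by simp)⟩

end PointwiseLipschitz

section StarUpperGradients

lemma ae_restrict_accPt {s : Set ℝ} (hs : MeasurableSet s) :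
    ∀ᵐ t ∂volume.restrict s, AccPt t (𝓟 s) := by
  rw [ae_restrict_iff' hs]
  filter_upwards [measure_eq_zero_iff_ae_notMem.1
    ((countable_setOfPred_isolated_right_within (s := s)).measure_zero volume)] with t ht hts
  refine accPt_principal_iff_nhdsWithin.2 (NeBot.mono ⟨fun h => ht ⟨hts, h⟩⟩ (nhdsWithin_mono _ ?_))
  exact fun r hr => ⟨hr.1, (mem_Ioi.1 hr.2).ne'⟩

lemma norm_le_of_hasDerivWithinAt_of_lipschitzOnWith {F : Type*} [NormedAddCommGroup F]
    [NormedSpace ℝ F] {g : ℝ → F} {u : F} {s : Set ℝ} {t : ℝ} {K : ℝ≥0} (ht : t ∈ s)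
    (hacc : AccPt t (𝓟 s)) (hg : LipschitzOnWith K g s) (hu : HasDerivWithinAt g u s t) :
    ‖u‖ ≤ K := by
  have : (𝓝[s \ {t}] t).NeBot := accPt_principal_iff_nhdsWithin.1 hacc
  refine le_of_tendsto (hasDerivWithinAt_iff_tendsto_slope.1 hu).norm ?_
  filter_upwards [eventually_mem_nhdsWithin] with r hr
  rw [slope_def_module, norm_smul, norm_inv, inv_mul_le_iff₀ (norm_pos_iff.2 (sub_ne_zero.2 hr.2)),
    mul_comm, ← dist_eq_norm, ← dist_eq_norm]
  exact hg.dist_le_mul r hr.1 t ht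

lemma measurableSet_isCompact_subset_iUnion {α Y ι : Type*} [MeasurableSpace α]
    [TopologicalSpace Y] [Countable ι] {Z : Set Y} (hZ : IsCompact Z) {O : ι → Set Y}
    (hO : ∀ i, IsOpen (O i)) {M : ι → Set α} (hM : ∀ i, MeasurableSet (M i)) :
    MeasurableSet {x | Z ⊆ ⋃ i ∈ {i | x ∈ M i}, O i} := by
  have : {x | Z ⊆ ⋃ i ∈ {i | x ∈ M i}, O i} =
      ⋃ F ∈ {F : Finset ι | Z ⊆ ⋃ i ∈ F, O i}, ⋂ i ∈ F, M i := by
    ext x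
    simp only [mem_ofPred_eq, mem_iUnion₂, mem_iInter₂, exists_prop]
    constructor
    · intro hx
      obtain ⟨F, hF, hfin, hcov⟩ := hZ.elim_finite_subcover_image (fun i _ => hO i) hx
      exact ⟨hfin.toFinset, by simpa using hcov, fun i hi => hF (by simpa using hi)⟩
    · rintro ⟨F, hF, hx⟩
      exact hF.trans (biUnion_subset_biUnion_left hx)
  rw [this]
  exact .biUnion (to_countable _) fun F _ => .biInter (to_countable _) fun i _ => hM i

variable {ι F : Type*} [NormedAddCommGroup F] [InnerProductSpace ℝ F] {A O : ι → Set F}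
  {K : ℝ≥0}

/-- The points at which every vector `v` with `‖v‖ ≤ K` and `|⟪v, w⟫| ≥ ε` is a direction excluded
by one of the pairs `(A i, O i)`. -/
def confinedSet (A O : ι → Set F) (K : ℝ≥0) (w : F) (ε : ℝ) : Set F :=
  {p | ∀ v, ‖v‖ ≤ K → ε ≤ |⟪v, w⟫| → ∃ i, p ∈ A i ∧ v ∈ O i}

lemma mem_confinedSet_of_mul_norm_sub_lt {p w w' : F} {ε : ℝ}
    (hw : ∀ v, (∀ i, p ∈ A i → v ∉ O i) → ⟪v, w⟫ = 0) (hw' : K * ‖w' - w‖ < ε) :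
    p ∈ confinedSet A O K w' ε := by
  intro v hv hε
  by_contra! hcon
  refine hε.not_gt (lt_of_le_of_lt ?_ hw')
  rw [← sub_zero ⟪v, w'⟫, ← hw v hcon, ← inner_sub_right]
  exact (abs_real_inner_le_norm _ _).trans (by gcongr)

variable [FiniteDimensional ℝ F]

lemma measurableSet_confinedSet [MeasurableSpace F] [Countable ι] (hA : ∀ i, MeasurableSet (A i))
    (hO : ∀ i, IsOpen (O i)) (K : ℝ≥0) (w : F) (ε : ℝ) :
    MeasurableSet (confinedSet A O K w ε) := by
  have hcompact : IsCompact (closedBall (0 : F) K ∩ {v | ε ≤ |⟪v, w⟫|}) :=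
    (isCompact_closedBall 0 _).inter_right (isClosed_le (by fun_prop) (by fun_prop))
  convert measurableSet_isCompact_subset_iUnion hcompact hO hA using 1
  ext p
  simp [confinedSet, subset_def]

lemma ae_exists_hasDerivWithinAt_notMem [Countable ι] (hnull : ∀ i, IsTangentNull (A i) (O i))
    {ψ : ℝ → F} {s : Set ℝ} (hs : MeasurableSet s) (hψ : LipschitzOnWith K ψ s) :
    ∀ᵐ t ∂volume.restrict s, UniqueDiffWithinAt ℝ s t ∧
      ∃ u, ‖u‖ ≤ K ∧ HasDerivWithinAt ψ u s t ∧ ∀ i, ψ t ∈ A i → u ∉ O i := by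
  have hae := ae_all_iff.2 fun i => measure_eq_zero_iff_ae_notMem.1 (hnull i ψ s)
  filter_upwards [ae_restrict_accPt hs, ae_restrict_of_ae hae, ae_restrict_mem hs,
    ae_restrict_of_ae (hψ.ae_differentiableWithinAt_of_mem (μ := volume))] with t hacc ht hts hdiff
  have hu := (hdiff hts).hasDerivWithinAt
  exact ⟨uniqueDiffWithinAt_iff_accPt.2 hacc, _,
    norm_le_of_hasDerivWithinAt_of_lipschitzOnWith hts hacc hψ hu, hu,
    fun i hA hO => ht i ⟨hts, hA, _, hO, hu⟩⟩

variable {Y : Type*} [MetricSpace Y]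

lemma Fragment.isCompact_dom (γ : Fragment Y) : IsCompact γ.dom :=
  γ.1.isCompact.image continuous_fst

open Classical in
lemma isStarUpperGradient_inner_piecewise [Countable ι] (hnull : ∀ i, IsTangentNull (A i) (O i))
    {φ : Y → F} (hφ : LipschitzWith K φ) (w : F) (ε : ℝ) :
    IsStarUpperGradient (fun y => ⟪φ y, w⟫)
      ((φ ⁻¹' confinedSet A O K w ε).piecewise (fun _ => ε) fun _ => K * ‖w‖) := by
  intro γ hγ
  have hlip : LipschitzOnWith K (φ ∘ γ.fn) γ.dom := by simpa using hφ.comp_lipschitzOnWith hγ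
  filter_upwards [ae_exists_hasDerivWithinAt_notMem hnull γ.isCompact_dom.measurableSet hlip]
    with t ⟨hdiff, u, huK, hu, hout⟩ v hv
  have huw : HasDerivWithinAt (fun t => ⟪φ (γ.fn t), w⟫) ⟪u, w⟫ γ.dom t := by
    simpa using hu.inner ℝ (hasDerivWithinAt_const t γ.dom w)
  obtain rfl : v = ⟪u, w⟫ := hdiff.eq_deriv _ hv huw
  by_cases hx : γ.fn t ∈ φ ⁻¹' confinedSet A O K w ε
  · rw [piecewise_eq_of_mem _ _ _ hx]
    by_contra! hlt
    obtain ⟨i, hA, hO⟩ := hx u huK hlt.le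
    exact hout i hA hO
  · rw [piecewise_eq_of_notMem _ _ _ hx]
    exact (abs_real_inner_le_norm u w).trans (by gcongr)

end StarUpperGradients

section IndependenceSet

variable {Y F : Type*} [MetricSpace Y] [NormedAddCommGroup F] [InnerProductSpace ℝ F] {K : ℝ≥0}

lemma abs_inner_sub_le_of_lipschitzWith {φ : Y → F} (hφ : LipschitzWith K φ) (x y : Y) (w : F) :
    |⟪φ y - φ x, w⟫| ≤ K * ‖w‖ * dist y x :=
  calc |⟪φ y - φ x, w⟫| ≤ ‖φ y - φ x‖ * ‖w‖ := abs_real_inner_le_norm _ _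
    _ ≤ K * dist y x * ‖w‖ := by gcongr; rw [← dist_eq_norm]; exact hφ.dist_le_mul y x
    _ = K * ‖w‖ * dist y x := by ring

lemma lipschitzWith_inner_const {φ : Y → F} (hφ : LipschitzWith K φ) (w : F) :
    LipschitzWith (K * ‖w‖₊) fun y => ⟪φ y, w⟫ :=
  LipschitzWith.of_dist_le_mul fun y x => by
    rw [Real.dist_eq, ← inner_sub_left]
    exact_mod_cast abs_inner_sub_le_of_lipschitzWith hφ x y w

lemma isLittleO_inner_of_forall_exists_near {φ : Y → F} (hφ : LipschitzWith K φ) {x : Y} {w : F}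
    (h : ∀ c > 0, ∃ w', ‖w - w'‖ ≤ c ∧ ∀ᶠ y in 𝓝 x, |⟪φ y - φ x, w'⟫| ≤ c * dist y x) :
    (fun y => ⟪φ y - φ x, w⟫) =o[𝓝 x] fun y => dist y x := by
  refine Asymptotics.isLittleO_iff.2 fun c hc => ?_
  obtain ⟨w', hw', hev⟩ := h (c / (K + 1)) (by positivity)
  filter_upwards [hev] with y hy
  rw [Real.norm_eq_abs, Real.norm_eq_abs, abs_dist]
  calc |⟪φ y - φ x, w⟫| = |⟪φ y - φ x, w'⟫ + ⟪φ y - φ x, w - w'⟫| := by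
        rw [← inner_add_right, add_sub_cancel]
    _ ≤ c / (K + 1) * dist y x + K * ‖w - w'‖ * dist y x :=
        (abs_add_le _ _).trans (add_le_add hy (abs_inner_sub_le_of_lipschitzWith hφ _ _ _))
    _ ≤ c / (K + 1) * dist y x + K * (c / (K + 1)) * dist y x := by gcongr
    _ = c * dist y x := by field_simp; ring

open Classical in
lemma isLittleO_inner_of_lipAt_le_piecewise {ι : Type*} {A O : ι → Set F} {φ : Y → F}
    (hφ : LipschitzWith K φ) {e : ℕ → F} (he : DenseRange e) {x : Y} {c : ℝ}
    (hx : ∀ i m : ℕ, lipAt (fun y => ⟪φ y, e i⟫) x ≤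
      c * (φ ⁻¹' confinedSet A O K (e i) (1 / ((m : ℝ) + 1))).piecewise
        (fun _ => 1 / ((m : ℝ) + 1)) (fun _ => K * ‖e i‖) x)
    {w : F} (hw : ∀ v, (∀ i, φ x ∈ A i → v ∉ O i) → ⟪v, w⟫ = 0) :
    (fun y => ⟪φ y - φ x, w⟫) =o[𝓝 x] fun y => dist y x := by
  refine isLittleO_inner_of_forall_exists_near hφ fun δ hδ => ?_
  obtain ⟨m, hm⟩ := exists_nat_one_div_lt (show 0 < δ / (|c| + 1) by positivity)
  have hnear : ∀ᶠ w' in 𝓝 w, ‖w - w'‖ < δ ∧ K * ‖w' - w‖ < 1 / ((m : ℝ) + 1) :=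
    (ContinuousAt.eventually_lt (by fun_prop) (by fun_prop) (by simpa using hδ)).and
      (ContinuousAt.eventually_lt (by fun_prop) (by fun_prop)
        (by rw [sub_self, norm_zero, mul_zero]; positivity))
  obtain ⟨i, hi, hi'⟩ := he.mem_nhds hnear
  have hlip : lipAt (fun y => ⟪φ y, e i⟫) x < δ := by
    have hxi := hx i m
    have hmem : x ∈ φ ⁻¹' confinedSet A O K (e i) (1 / ((m : ℝ) + 1)) :=
      mem_confinedSet_of_mul_norm_sub_lt hw hi'
    rw [piecewise_eq_of_mem _ _ _ hmem] at hxi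
    calc _ ≤ c * (1 / ((m : ℝ) + 1)) := hxi
      _ ≤ (|c| + 1) * (1 / ((m : ℝ) + 1)) := by gcongr; linarith [le_abs_self c]
      _ < δ := by rwa [lt_div_iff₀' (by positivity)] at hm
  refine ⟨e i, hi.le, ?_⟩
  simpa only [inner_sub_left] using
    eventually_le_of_lipAt_lt (lipschitzWith_inner_const hφ _) hlip

variable {n : ℕ} {φ : Y → E n}

lemma notMem_indSet_iff (hφ : LipschitzWith K φ) {x : Y} :
    x ∉ indSet φ ↔
      ∃ w : E n, ‖w‖ = 1 ∧ (fun y => ⟪φ y - φ x, w⟫) =o[𝓝 x] fun y => dist y x := by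
  simp only [indSet, mem_ofPred_eq, not_forall, not_lt, exists_prop, inner_sub_left]
  exact exists_congr fun w => and_congr_right fun _ =>
    lipAt_nonpos_iff_isLittleO (lipschitzWith_inner_const hφ w)

lemma eq_zero_of_isLittleO_inner (hφ : LipschitzWith K φ) {x : Y} (hx : x ∈ indSet φ) {w : E n}
    (hw : (fun y => ⟪φ y - φ x, w⟫) =o[𝓝 x] fun y => dist y x) : w = 0 := by
  by_contra hw₀
  refine (notMem_indSet_iff hφ).2 ⟨‖w‖⁻¹ • w, norm_smul_inv_norm hw₀, ?_⟩ hx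
  simpa only [inner_smul_right] using hw.const_mul_left ‖w‖⁻¹

lemma indSet_eq_univ_of_dim_zero (φ : Y → E 0) : indSet φ = univ :=
  eq_univ_of_forall fun _ w hw => by simp [Subsingleton.elim w 0] at hw

lemma isClosed_setOf_exists_abs_inner_le (hφ : Continuous φ) (c δ : ℝ) :
    IsClosed {x | ∃ w : sphere (0 : E n) 1, ∀ y, dist y x < δ →
      |⟪φ y - φ x, (w : E n)⟫| ≤ c * dist y x} := by
  have hclosed : IsClosed {p : Y × sphere (0 : E n) 1 | ∀ y, dist y p.1 < δ →
      |⟪φ y - φ p.1, (p.2 : E n)⟫| ≤ c * dist y p.1} := by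
    simp only [imp_iff_not_or, not_lt, ofPred_forall, ofPred_or]
    exact isClosed_iInter fun y => (isClosed_le (by fun_prop) (by fun_prop)).union
      (isClosed_le (by fun_prop) (by fun_prop))
  convert isClosedMap_fst_of_compactSpace _ hclosed using 1
  ext x
  simp

lemma compl_indSet_eq_iInter_iUnion (hφ : LipschitzWith K φ) :
    (indSet φ)ᶜ = ⋂ k : ℕ, ⋃ m : ℕ, {x | ∃ w : sphere (0 : E n) 1, ∀ y,
      dist y x < 1 / ((m : ℝ) + 1) → |⟪φ y - φ x, (w : E n)⟫| ≤ 1 / ((k : ℝ) + 1) * dist y x} := by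
  ext x
  simp only [mem_compl_iff, notMem_indSet_iff hφ, mem_iInter, mem_iUnion, mem_ofPred_eq]
  constructor
  · rintro ⟨w, hw₁, hw⟩ k
    obtain ⟨ε, hε, hy⟩ := Metric.eventually_nhds_iff.1
      (hw.def (c := 1 / ((k : ℝ) + 1)) (by positivity))
    obtain ⟨m, hm⟩ := exists_nat_one_div_lt hε
    exact ⟨m, ⟨w, by simpa using hw₁⟩, fun y hyx => by simpa using hy (hyx.trans hm)⟩
  · intro hx
    choose m w hw using hx
    obtain ⟨w₀, -, σ, hσ, hlim⟩ := (isCompact_univ (X := sphere (0 : E n) 1)).tendsto_subseq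
      fun k => mem_univ (w k)
    refine ⟨w₀, by simp, isLittleO_inner_of_forall_exists_near hφ fun c hc => ?_⟩
    have hnear : ∀ᶠ i in atTop, ‖(w₀ : E n) - w (σ i)‖ < c :=
      (hlim.eventually (ball_mem_nhds w₀ hc)).mono fun i hi => by rwa [← dist_eq_norm, dist_comm]
    have hsmall : ∀ᶠ i in atTop, 1 / ((σ i : ℝ) + 1) < c :=
      (tendsto_one_div_add_atTop_nhds_zero_nat.comp hσ.tendsto_atTop).eventually (gt_mem_nhds hc)
    obtain ⟨i, hi, hi'⟩ := (hnear.and hsmall).exists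
    refine ⟨w (σ i), hi.le, ?_⟩
    filter_upwards [ball_mem_nhds x (show 0 < 1 / ((m (σ i) : ℝ) + 1) by positivity)] with y hy
    exact (hw _ y hy).trans (by gcongr)

variable [MeasurableSpace Y] [BorelSpace Y]

lemma measurableSet_indSet (hφ : LipschitzWith K φ) : MeasurableSet (indSet φ) := by
  rw [← MeasurableSet.compl_iff, compl_indSet_eq_iInter_iUnion hφ]
  exact .iInter fun k => .iUnion fun m =>
    (isClosed_setOf_exists_abs_inner_le hφ.continuous _ _).measurableSet

theorem ae_notMem_indSet_of_dimH_lt {μ : Measure Y} {C : Y → ℝ}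
    (h : ∀ f : Y → ℝ, (∃ K, LipschitzWith K f) → ∀ ρ : Y → ℝ, Measurable ρ →
      IsStarUpperGradient f ρ → ∀ᵐ x ∂μ, lipAt f x ≤ C x * ρ x)
    (hφ : LipschitzWith K φ) (hn : dimH (univ : Set Y) < n) : ∀ᵐ x ∂μ, x ∉ indSet φ := by
  classical
  obtain ⟨s, hds, hsn⟩ := ENNReal.lt_iff_exists_nnreal_btwn.1 hn
  obtain ⟨A, O, hA, hO, hnull, hplane⟩ := exists_isTangentNull_of_hausdorffMeasure_eq_zero
    (n := n) (s := s) (by exact_mod_cast zero_le.trans_lt hds) (by exact_mod_cast hsn)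
    (hausdorffMeasure_of_dimH_lt (hφ.dimH_range_le.trans_lt hds))
  let e := TopologicalSpace.denseSeq (E n)
  have hae : ∀ᵐ x ∂μ, ∀ i m : ℕ, lipAt (fun y => ⟪φ y, e i⟫) x ≤
      C x * (φ ⁻¹' confinedSet A O K (e i) (1 / ((m : ℝ) + 1))).piecewise
        (fun _ => 1 / ((m : ℝ) + 1)) (fun _ => K * ‖e i‖) x :=
    ae_all_iff.2 fun i => ae_all_iff.2 fun m => h _ ⟨_, lipschitzWith_inner_const hφ _⟩ _
      (measurable_const.piecewise (hφ.continuous.measurable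
        (measurableSet_confinedSet hA hO _ _ _)) measurable_const)
      (isStarUpperGradient_inner_piecewise hnull hφ _ _)
  filter_upwards [hae] with x hx
  obtain ⟨w, hw₁, hw⟩ := hplane (φ x) (mem_range_self x)
  exact (notMem_indSet_iff hφ).2 ⟨w, hw₁, isLittleO_inner_of_lipAt_le_piecewise hφ
    (TopologicalSpace.denseRange_denseSeq _) hx hw⟩

end IndependenceSet

section Charts

variable {Y : Type*} [MetricSpace Y] {n : ℕ}

lemma tendsto_abs_div_dist_iff_isLittleO {a : Y → ℝ} {x : Y} (ha : a x = 0) :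
    Tendsto (fun y => |a y| / dist y x) (𝓝[≠] x) (𝓝 0) ↔ a =o[𝓝 x] fun y => dist y x := by
  have hne : ∀ᶠ y in 𝓝[≠] x, dist y x = 0 → |a y| = 0 :=
    eventually_mem_nhdsWithin.mono fun y hy h => absurd (dist_eq_zero.1 h) hy
  rw [← Asymptotics.isLittleO_iff_tendsto' hne, Asymptotics.isLittleO_abs_left,
    ← nhdsNE_sup_pure, Asymptotics.isLittleO_sup]
  simp [ha]

lemma eq_of_tendsto_of_mem_indSet {f : Y → ℝ} {φ : Y → E n} {K : ℝ≥0} (hφ : LipschitzWith K φ)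
    {x : Y} (hx : x ∈ indSet φ) {L L' : E n →ₗ[ℝ] ℝ}
    (hL : Tendsto (fun y => |f y - f x - L (φ y - φ x)| / dist y x) (𝓝[≠] x) (𝓝 0))
    (hL' : Tendsto (fun y => |f y - f x - L' (φ y - φ x)| / dist y x) (𝓝[≠] x) (𝓝 0)) :
    L = L' := by
  rw [tendsto_abs_div_dist_iff_isLittleO (by simp)] at hL hL'
  let w : E n :=
    (InnerProductSpace.toDual ℝ (E n)).symm (LinearMap.toContinuousLinearMap (L' - L))
  have hw : ∀ v, ⟪v, w⟫ = L' v - L v := fun v => by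
    rw [real_inner_comm, InnerProductSpace.toDual_symm_apply]
    simp
  have hw₀ : w = 0 := eq_zero_of_isLittleO_inner hφ hx <|
    (hL.sub hL').congr_left fun y => by rw [hw]; ring
  ext v
  rw [← sub_eq_zero, ← neg_eq_zero, neg_sub, ← hw, hw₀, inner_zero_right]

/-- The map `(f, φ)` into `ℝⁿ⁺¹`, used to test whether `f` is independent of the
coordinates `φ` to first order. -/
def consMap (f : Y → ℝ) (φ : Y → E n) (x : Y) : E (n + 1) :=
  WithLp.toLp 2 (Fin.cons (f x) fun i => φ x i)

lemma exists_lipschitzWith_consMap {f : Y → ℝ} {φ : Y → E n} {K L : ℝ≥0}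
    (hf : LipschitzWith K f) (hφ : LipschitzWith L φ) : ∃ M, LipschitzWith M (consMap f φ) := by
  have hcons : LipschitzWith (max K L)
      fun x => (Fin.cons (f x) fun i => φ x i : Fin (n + 1) → ℝ) := by
    refine LipschitzWith.of_dist_le_mul fun x y =>
      (dist_pi_le_iff (by positivity)).2 <| Fin.cases ?_ fun i => ?_
    · exact (hf.weaken (le_max_left _ _)).dist_le_mul x y
    · calc dist (φ x i) (φ y i) ≤ dist (φ x) (φ y) := by
            rw [dist_eq_norm, dist_eq_norm]
            exact PiLp.norm_apply_le (φ x - φ y) i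
        _ ≤ max K L * dist x y := (hφ.weaken (le_max_right _ _)).dist_le_mul x y
  exact ⟨_, (PiLp.lipschitzWith_toLp 2 _).comp hcons⟩

lemma inner_consMap_sub {Y : Type*} (f : Y → ℝ) (φ : Y → E n) (x y : Y) (w : E (n + 1)) :
    ⟪consMap f φ y - consMap f φ x, w⟫ =
      w 0 * (f y - f x) + ⟪φ y - φ x, (WithLp.toLp 2 fun i => w i.succ : E n)⟫ := by
  simp [PiLp.inner_apply, Fin.sum_univ_succ, consMap]

lemma diffWrtAt_of_notMem_indSet_consMap {f : Y → ℝ} {φ : Y → E n} {K L : ℝ≥0}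
    (hf : LipschitzWith K f) (hφ : LipschitzWith L φ) {x : Y} (hx : x ∈ indSet φ)
    (hfx : x ∉ indSet (consMap f φ)) : DiffWrtAt φ f x := by
  obtain ⟨M, hM⟩ := exists_lipschitzWith_consMap hf hφ
  obtain ⟨w, hw₁, hw⟩ := (notMem_indSet_iff hM).1 hfx
  simp only [inner_consMap_sub] at hw
  set w' : E n := WithLp.toLp 2 fun i => w i.succ
  have hw₀ : w 0 ≠ 0 := by
    intro h₀
    have hw'₀ : w' = 0 := eq_zero_of_isLittleO_inner hφ hx (by simpa [h₀] using hw)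
    have : w = 0 := by
      ext i
      exact Fin.cases h₀ (fun i => congrArg (fun v : E n => v i) hw'₀) i
    simp [this] at hw₁
  have hdiff : Tendsto (fun y => |f y - f x - (-(w 0)⁻¹ • innerₛₗ ℝ w') (φ y - φ x)| / dist y x)
      (𝓝[≠] x) (𝓝 0) := by
    refine (tendsto_abs_div_dist_iff_isLittleO (by simp)).2 <|
      (hw.const_mul_left (w 0)⁻¹).congr_left fun y => ?_
    rw [real_inner_comm, mul_add, inv_mul_cancel_left₀ hw₀]
    simp
  exact ⟨_, hdiff, fun L hL => eq_of_tendsto_of_mem_indSet hφ hx hL hdiff⟩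

variable [MeasurableSpace Y] {μ : Measure Y}

/-- `(U, φ)` is a Cheeger chart of `(Y, d, μ)`: `φ` is Lipschitz and every Lipschitz function is
differentiable with respect to `φ` at almost every point of the measurable set `U`. -/
def IsChart (μ : Measure Y) (φ : Y → E n) (U : Set Y) : Prop :=
  MeasurableSet U ∧ (∃ K, LipschitzWith K φ) ∧
    ∀ f : Y → ℝ, (∃ K, LipschitzWith K f) → ∀ᵐ x ∂μ, x ∈ U → DiffWrtAt φ f x

lemma isChart_of_measure_eq_zero {φ : Y → E n} {K : ℝ≥0} (hφ : LipschitzWith K φ) {U : Set Y}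
    (hU : MeasurableSet U) (hμ : μ U = 0) : IsChart μ φ U :=
  ⟨hU, ⟨K, hφ⟩, fun _ _ =>
    (measure_eq_zero_iff_ae_notMem.1 hμ).mono fun _ hx hxU => absurd hxU hx⟩

lemma isLipDiffSpaceWith_of_ae_exists_mem {ι : Type*} [Countable ι] {P : ℕ → Prop} (hP₀ : P 0)
    {N : ι → ℕ} {U : ι → Set Y} {φ : ∀ i, Y → E (N i)} (hN : ∀ i, P (N i))
    (hchart : ∀ i, IsChart μ (φ i) (U i)) (hcover : ∀ᵐ x ∂μ, ∃ i, x ∈ U i) :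
    IsLipDiffSpaceWith μ P := by
  have hnull : μ (⋃ i, U i)ᶜ = 0 := mem_ae_iff.1 <| hcover.mono fun x hx => mem_iUnion.2 hx
  let V : Option ι → Set Y := fun o => o.elim (⋃ i, U i)ᶜ U
  have hV : ∀ o, ∃ (m : ℕ) (ψ : Y → E m), P m ∧ IsChart μ ψ (V o)
    | none => ⟨0, fun _ => 0, hP₀, isChart_of_measure_eq_zero (LipschitzWith.const 0)
        (MeasurableSet.iUnion fun i => (hchart i).1).compl hnull⟩
    | some i => ⟨N i, φ i, hN i, hchart i⟩
  choose m ψ hm hψ using hV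
  obtain ⟨e, he⟩ := exists_surjective_nat (Option ι)
  refine ⟨fun k => m (e k), fun k => V (e k), fun k => ψ (e k), fun k => hm _,
    fun k => (hψ _).1, ?_, fun k => (hψ _).2.1, fun f hf k => (hψ _).2.2 f hf⟩
  rw [he.iUnion_comp, iUnion_option]
  exact compl_union_self _

variable [BorelSpace Y]

lemma exists_countable_forall_ae_mem_indSet (μ : Measure Y) [SFinite μ] (n : ℕ) :
    ∃ T : Set (Y → E n), T.Countable ∧ (∀ φ ∈ T, ∃ K, LipschitzWith K φ) ∧
      ∀ φ : Y → E n, (∃ K, LipschitzWith K φ) →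
        ∀ᵐ x ∂μ, x ∈ indSet φ → ∃ ψ ∈ T, x ∈ indSet ψ := by
  obtain ⟨D, hDsub, hD, hmax⟩ := Measure.exists_ae_subset_biUnion_countable μ
    (C := indSet '' {φ : Y → E n | ∃ K, LipschitzWith K φ})
    (by rintro _ ⟨φ, ⟨K, hφ⟩, rfl⟩; exact measurableSet_indSet hφ)
  choose! g hg hgD using fun s (hs : s ∈ D) => hDsub hs
  refine ⟨g '' D, hD.image g, forall_mem_image.2 fun s hs => hg s hs, fun φ hφ => ?_⟩
  filter_upwards [hmax _ (mem_image_of_mem _ hφ)] with x hx hxφ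
  obtain ⟨s, hs, hxs⟩ := hx hxφ
  exact ⟨g s, mem_image_of_mem g hs, by rwa [hgD s hs]⟩

lemma isChart_indSet_diff {φ : Y → E n} {K : ℝ≥0} (hφ : LipschitzWith K φ)
    {T : Set (Y → E (n + 1))} (hT : T.Countable) (hTlip : ∀ ψ ∈ T, ∃ K, LipschitzWith K ψ)
    (hmax : ∀ ψ : Y → E (n + 1), (∃ K, LipschitzWith K ψ) →
      ∀ᵐ x ∂μ, x ∈ indSet ψ → ∃ ψ' ∈ T, x ∈ indSet ψ') :
    IsChart μ φ (indSet φ \ ⋃ ψ ∈ T, indSet ψ) := by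
  refine ⟨(measurableSet_indSet hφ).diff <| .biUnion hT fun ψ hψ =>
    measurableSet_indSet (hTlip ψ hψ).choose_spec, ⟨K, hφ⟩, fun f ⟨L, hf⟩ => ?_⟩
  filter_upwards [hmax _ (exists_lipschitzWith_consMap hf hφ)] with x hx hxU
  exact diffWrtAt_of_notMem_indSet_consMap hf hφ hxU.1 fun hfx =>
    hxU.2 (by simpa only [mem_iUnion, exists_prop] using hx hfx)

theorem isLipDiffSpaceWith_of_ae_notMem_indSet [SFinite μ] {d : ℝ≥0∞} (hd : d < ⊤)
    (h : ∀ (n : ℕ) (φ : Y → E n) (K : ℝ≥0), LipschitzWith K φ → d < n → ∀ᵐ x ∂μ, x ∉ indSet φ) :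
    IsLipDiffSpaceWith μ fun n => (n : ℝ≥0∞) ≤ d := by
  choose T hT hTlip hmax using exists_countable_forall_ae_mem_indSet μ
  have hcount : ∀ n, Countable (T n) := fun n => (hT n).to_subtype
  refine isLipDiffSpaceWith_of_ae_exists_mem (ι := Σ n : {n : ℕ // (n : ℝ≥0∞) ≤ d}, T n)
    (N := fun p => p.1) (φ := fun p => p.2)
    (U := fun p => indSet (p.2 : Y → E p.1) \ ⋃ ψ ∈ T (p.1 + 1), indSet ψ) (by simp)
    (fun p => p.1.2)
    (fun p => isChart_indSet_diff (hTlip _ _ p.2.2).choose_spec (hT _) (hTlip _) (hmax _)) ?_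
  have hzero : ∀ᵐ x ∂μ, ∃ ψ ∈ T 0, x ∈ indSet ψ := by
    simpa [indSet_eq_univ_of_dim_zero] using hmax 0 (fun _ => 0) ⟨0, LipschitzWith.const 0⟩
  have hlarge : ∀ᵐ x ∂μ, ∀ n : ℕ, d < n → ∀ ψ ∈ T n, x ∉ indSet ψ :=
    ae_all_iff.2 fun n => Filter.eventually_all.2 fun hn => (ae_ball_iff (hT n)).2 fun ψ hψ =>
      h n ψ _ (hTlip n ψ hψ).choose_spec hn
  filter_upwards [hzero, hlarge] with x hx₀ hlarge
  by_contra! hx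
  have hall : ∀ n, ∃ ψ ∈ T n, x ∈ indSet ψ := fun n => by
    induction n with
    | zero => exact hx₀
    | succ n ih =>
      obtain ⟨ψ, hψ, hxψ⟩ := ih
      have hn : (n : ℝ≥0∞) ≤ d := not_lt.1 fun hn => hlarge n hn ψ hψ hxψ
      simpa [hxψ] using hx ⟨⟨n, hn⟩, ⟨ψ, hψ⟩⟩
  obtain ⟨n, hn⟩ := ENNReal.exists_nat_gt hd.ne
  obtain ⟨ψ, hψ, hxψ⟩ := hall n
  exact hlarge n hn ψ hψ hxψ

theorem cheeger_via_star_upper_gradients_general (μ : Measure Y) [SFinite μ]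
    (hdim : dimH (univ : Set Y) < ⊤) (C : Y → ℝ)
    (h : ∀ f : Y → ℝ, (∃ K, LipschitzWith K f) → ∀ ρ : Y → ℝ, Measurable ρ →
      IsStarUpperGradient f ρ → ∀ᵐ x ∂μ, lipAt f x ≤ C x * ρ x) :
    IsLipDiffSpaceWith μ fun k => (k : ℝ≥0∞) ≤ dimH (univ : Set Y) :=
  isLipDiffSpaceWith_of_ae_notMem_indSet hdim fun _ _ _ hφ hn => ae_notMem_indSet_of_dimH_lt h hφ hn

end Charts

/-- If `dim_H X < ∞` and there is `C ≥ 1` such that `Lip(f,·) ≤ C ρ`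
`μ`-a.e. for every Lipschitz `f : X → ℝ` and every Borel `*`-upper gradient `ρ` of `f`,
then `(X,d,μ)` is a Lipschitz differentiability space with chart dimensions at most
`dim_H X`. -/
theorem cheeger_via_star_upper_gradients (μ : Measure X) [SigmaFinite μ]
    (hdim : dimH (Set.univ : Set X) < ⊤) (C : ℝ) (hC : 1 ≤ C)
    (h : ∀ f : X → ℝ, (∃ K, LipschitzWith K f) → ∀ ρ : X → ℝ, Measurable ρ →
      IsStarUpperGradient f ρ → ∀ᵐ x ∂μ, lipAt f x ≤ C * ρ x) :
    IsLipDiffSpaceWith μ (fun k => (k : ℝ≥0∞) ≤ dimH (Set.univ : Set X)) :=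
  cheeger_via_star_upper_gradients_general μ hdim (fun _ => C) h

end BKO
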